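/- arXiv:2307.06885 — 2 statements merged into one kernel-verified Lean document; each statement's English description precedes it below -/
import Mathlib

section
/- Let Ω ⊂ ℝ² be a bounded, open, connected set with Lipschitz boundary and let u ∈ W^{1,1}(Ω;S¹) be such that ⟨Det(∇u),φ⟩ = π Σ_{i=1}^{n} (φ(x_i) − φ(y_i)) for all φ ∈ Lip₀(Ω), where the finite family ((x_i,y_i))_{i=1}^n of pairs of points of cl(Ω) satisfies (P_f). Then for every ε > 0 there exist u_ε ∈ W^{1,1}(Ω;S¹) and points x_i^ε, y_i^ε ∈ cl(Ω), i = 1,…,n, such that: (i) ⟨Det(∇u_ε),φ⟩ = π Σ_{i=1}^{n} (φ(x_i^ε) − φ(y_i^ε)) for all φ ∈ Lip₀(Ω), and the points among the x_i^ε, y_i^ε lying in Ω are distinct and three by three not collinear; (ii) ‖u − u_ε‖_{W^{1,1}} + ‖Det(∇u) − Det(∇u_ε)‖_flat < ε. -/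
open MeasureTheory Metric Filter Set
open scoped ENNReal NNReal Topology Classical

noncomputable section

abbrev R2 := EuclideanSpace ℝ (Fin 2)

/-- `Ω ⊂ ℝ²` has Lipschitz boundary: near every boundary point, after a rigid motion,
`Ω` coincides with the open region strictly above the graph of a Lipschitz function. -/
def HasLipschitzBoundary (Ω : Set R2) : Prop :=
  ∀ p ∈ frontier Ω, ∃ r : ℝ, 0 < r ∧ ∃ (f : R2 ≃ᵢ R2) (γ : ℝ → ℝ) (L : ℝ≥0),
    LipschitzWith L γ ∧ ∀ x ∈ Metric.ball p r, (x ∈ Ω ↔ γ (f x 0) < f x 1)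

/-- `G` is the weak (distributional) gradient of `u` on `Ω`:
`∫_Ω u_i ∂_j φ = -∫_Ω G_{ij} φ` for all test functions `φ ∈ C_c^∞(Ω)`. -/
def IsWeakGradient (Ω : Set R2) (u : R2 → R2) (G : R2 → Matrix (Fin 2) (Fin 2) ℝ) : Prop :=
  ∀ φ : R2 → ℝ, ContDiff ℝ (⊤ : ℕ∞) φ → HasCompactSupport φ → tsupport φ ⊆ Ω →
    ∀ i j : Fin 2,
      (∫ x in Ω, u x i * fderiv ℝ φ x (EuclideanSpace.single j 1)) =
        - ∫ x in Ω, G x i j * φ x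

/-- `u ∈ W^{1,1}(Ω;ℝ²)` with weak gradient `G`. -/
def MemW11 (Ω : Set R2) (u : R2 → R2) (G : R2 → Matrix (Fin 2) (Fin 2) ℝ) : Prop :=
  IntegrableOn u Ω ∧ (∀ i j : Fin 2, IntegrableOn (fun x => G x i j) Ω) ∧
    IsWeakGradient Ω u G

/-- `|u| = 1` a.e. in `Ω`. -/
def SphereValued (Ω : Set R2) (u : R2 → R2) : Prop :=
  ∀ᵐ x ∂(volume.restrict Ω), ‖u x‖ = 1

/-- Frobenius norm of a `2×2` matrix. -/
def frob (M : Matrix (Fin 2) (Fin 2) ℝ) : ℝ :=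
  Real.sqrt (∑ i, ∑ j, (M i j) ^ 2)

/-- Jacobian matrix of a map `v : ℝ² → ℝ²`. -/
def jacobianMatrix (v : R2 → R2) (x : R2) : Matrix (Fin 2) (Fin 2) ℝ :=
  Matrix.of fun i j => fderiv ℝ v x (EuclideanSpace.single j 1) i

/-- Classical graph area `A(v,A) = ∫_A √(1 + |∇v|² + (Jv)²)` of a `C¹` map. -/
def classicalArea (A : Set R2) (v : R2 → R2) : ℝ≥0∞ :=
  ∫⁻ x in A, ENNReal.ofReal
    (Real.sqrt (1 + (∑ i, ∑ j, (jacobianMatrix v x i j) ^ 2) + (jacobianMatrix v x).det ^ 2))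

/-- `L¹`-relaxed area functional `𝒜(u,A)`. -/
def relaxedArea (u : R2 → R2) (A : Set R2) : ℝ≥0∞ :=
  sInf { a : ℝ≥0∞ | ∃ v : ℕ → R2 → R2,
    (∀ k, ContDiffOn ℝ 1 (v k) A) ∧
    (∀ k, IntegrableOn (fun x => v k x - u x) A) ∧
    Tendsto (fun k => ∫ x in A, ‖v k x - u x‖) atTop (nhds 0) ∧
    a = Filter.liminf (fun k => classicalArea A (v k)) atTop }

/-- `λ_u = (1/2)(u₁ ∇^⊥u₂ − u₂ ∇^⊥u₁)`, computed from the weak gradient `G`. -/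
def lambdaVec (u : R2 → R2) (G : R2 → Matrix (Fin 2) (Fin 2) ℝ) (x : R2) : Fin 2 → ℝ :=
  ![ (1 / 2) * (-(u x 0) * G x 1 1 + u x 1 * G x 0 1),
     (1 / 2) * (u x 0 * G x 1 0 - u x 1 * G x 0 0) ]

/-- Distributional Jacobian pairing `⟨Det(∇u), φ⟩ = ∫_Ω λ_u · ∇φ`. -/
def detPairing (Ω : Set R2) (u : R2 → R2) (G : R2 → Matrix (Fin 2) (Fin 2) ℝ)
    (φ : R2 → ℝ) : ℝ :=
  ∫ x in Ω, ∑ j, lambdaVec u G x j * fderiv ℝ φ x (EuclideanSpace.single j 1)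

/-- `φ ∈ Lip₀(Ω)`: Lipschitz on `cl(Ω)` and vanishing on `∂Ω`. -/
def MemLip0 (Ω : Set R2) (φ : R2 → ℝ) : Prop :=
  (∃ L : ℝ≥0, LipschitzOnWith L φ (closure Ω)) ∧ ∀ p ∈ frontier Ω, φ p = 0

/-- Admissible test functions for the flat norm: Lipschitz constant `≤ L` on `cl(Ω)`,
vanishing on `Z`, and bounded by `1` on `cl(Ω)`. -/
def FlatAdmissible (Ω Z : Set R2) (L : ℝ≥0) (φ : R2 → ℝ) : Prop :=
  LipschitzOnWith L φ (closure Ω) ∧ (∀ p ∈ Z, φ p = 0) ∧ ∀ p ∈ closure Ω, |φ p| ≤ 1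

/-- Flat norm of a functional `F`, with vanishing condition on the set `Z`. -/
def flatNormOn (Ω Z : Set R2) (L : ℝ≥0) (F : (R2 → ℝ) → ℝ) : ℝ≥0∞ :=
  ⨆ φ ∈ {φ : R2 → ℝ | FlatAdmissible Ω Z L φ}, ENNReal.ofReal (F φ)

/-- Flat norm of a functional `F` on `Lip₀(Ω)`; `L = 2` gives `‖·‖_{flat,α}` (α = 1/2),
`L = 1` gives `‖·‖_flat`. -/
def flatNorm (Ω : Set R2) (L : ℝ≥0) (F : (R2 → ℝ) → ℝ) : ℝ≥0∞ :=
  flatNormOn Ω (frontier Ω) L F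

/-- `d̄_Ω(x,y) = min{|x−y|, dist(x,∂Ω) + dist(y,∂Ω)}`. -/
def dbar (Ω : Set R2) (x y : R2) : ℝ :=
  min (dist x y) (Metric.infDist x (frontier Ω) + Metric.infDist y (frontier Ω))

/-- Countably subadditive interior envelope `𝒜**(u,V)` (relative to `Ω`). -/
def envA (u : R2 → R2) (Ω V : Set R2) : ℝ≥0∞ :=
  sInf { a : ℝ≥0∞ | ∃ A : ℕ → Set R2,
    (∀ k, IsOpen (A k) ∧ A k ⊆ Ω) ∧ V ⊆ ⋃ k, A k ∧ a = ∑' k, relaxedArea u (A k) }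

/-- Property `(P_f)` for a finite family of pairs of points of `cl(Ω)`. -/
def SatisfiesPf (Ω : Set R2) {n : ℕ} (x y : Fin n → R2) : Prop :=
  (∀ k, (x k ∈ Ω ∧ y k ∈ frontier Ω ∧ dist (x k) (y k) = Metric.infDist (x k) (frontier Ω)) ∨
        (y k ∈ Ω ∧ x k ∈ frontier Ω ∧ dist (x k) (y k) = Metric.infDist (y k) (frontier Ω))) ∧
  ∀ i j, x i ∈ Ω → y j ∈ Ω → x i ≠ y j

/-- The points of the family `x, y` lying in `Ω` are distinct and three by three
not collinear. -/
def InteriorPointsGeneric (Ω : Set R2) {n : ℕ} (x y : Fin n → R2) : Prop :=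
  (∀ a b : Fin n ⊕ Fin n, Sum.elim x y a ∈ Ω → Sum.elim x y b ∈ Ω → a ≠ b →
    Sum.elim x y a ≠ Sum.elim x y b) ∧
  ∀ a b c : Fin n ⊕ Fin n, Sum.elim x y a ∈ Ω → Sum.elim x y b ∈ Ω → Sum.elim x y c ∈ Ω →
    a ≠ b → a ≠ c → b ≠ c →
    ¬ Collinear ℝ ({Sum.elim x y a, Sum.elim x y b, Sum.elim x y c} : Set R2)

/-- `ι(w₁,w₂) = (w₁,−w₂)`. -/
def conjPt (w : R2) : R2 := (WithLp.equiv 2 (Fin 2 → ℝ)).symm ![w 0, -(w 1)]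

/-- `u` is a (positive/negative) vortex around the points of the family lying in `Ω`:
the closed discs of radii `ρ` are contained in `Ω` and pairwise disjoint,
`u(z) = (z−x_i)/|z−x_i|` on `B_{ρ}(x_i)` and `u(z) = ι((z−y_j)/|z−y_j|)` on `B_{ρ}(y_j)`. -/
def VortexAt (Ω : Set R2) (u : R2 → R2) {n : ℕ} (x y : Fin n → R2)
    (ρ : Fin n ⊕ Fin n → ℝ) : Prop :=
  (∀ a, Sum.elim x y a ∈ Ω → Metric.closedBall (Sum.elim x y a) (ρ a) ⊆ Ω) ∧
  (∀ a b, a ≠ b → Sum.elim x y a ∈ Ω → Sum.elim x y b ∈ Ω →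
    Disjoint (Metric.closedBall (Sum.elim x y a) (ρ a))
      (Metric.closedBall (Sum.elim x y b) (ρ b))) ∧
  (∀ i, x i ∈ Ω → ∀ᵐ z ∂(volume.restrict (Metric.ball (x i) (ρ (Sum.inl i)))),
    u z = ‖z - x i‖⁻¹ • (z - x i)) ∧
  (∀ i, y i ∈ Ω → ∀ᵐ z ∂(volume.restrict (Metric.ball (y i) (ρ (Sum.inr i)))),
    u z = conjPt (‖z - y i‖⁻¹ • (z - y i)))

/-- The energy `E(I_P, I_D, τ)` of a partition `{I_Dᶜ, I_D}` of `I` and an injection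
`τ : I_D → I`. -/
def energy (Ω : Set R2) {n : ℕ} (x y : Fin n → R2) (ID : Finset (Fin n))
    (τ : Fin n → Fin n) : ℝ≥0∞ :=
  ((IDᶜ.filter fun k => x k ∈ Ω).card : ℝ≥0∞) +
  (((Finset.univ \ ID.image τ).filter fun j => y j ∈ Ω).card : ℝ≥0∞) +
  2 * ∑ k ∈ ID, μH[1] (segment ℝ (y (τ k)) (x k) ∩ Ω)

def vv (p : R2) (i : Fin 2) (z : R2) : ℝ := (z i - p i) / ‖z - p‖
def Dv (p : R2) (i j : Fin 2) (z : R2) : ℝ :=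
  (if i = j then 1 else 0) / ‖z - p‖ - (z i - p i) * (z j - p j) / ‖z - p‖ ^ 3
def vr (δ : ℝ) (p : R2) (i : Fin 2) (z : R2) : ℝ := (z i - p i) / √(‖z - p‖ ^ 2 + δ)
def Dvr (δ : ℝ) (p : R2) (i j : Fin 2) (z : R2) : ℝ :=
  (if i = j then 1 else 0) / √(‖z - p‖ ^ 2 + δ)
    - (z i - p i) * (z j - p j) / √(‖z - p‖ ^ 2 + δ) ^ 3

lemma integrable_pow (Ω : Set R2) (hb : Bornology.IsBounded Ω) (p : R2) (α : ℝ) (hα : α < 2) :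
    IntegrableOn (fun z : R2 => ‖z - p‖ ^ (-α)) Ω := by
  have h : LocallyIntegrable (fun z : R2 => ‖z‖ ^ (-α)) volume := by
    refine locallyIntegrable_of_norm_le_rpow (C := 1) (α := α) (by simp) (by simpa using hα) ?_ ?_
    · filter_upwards with x
      rw [one_mul, Real.norm_of_nonneg (Real.rpow_nonneg (norm_nonneg _) _)]
    · exact (measurable_norm.pow_const _).aestronglyMeasurable
  obtain ⟨R, hR⟩ := hb.subset_ball p
  have h2 : IntegrableOn (fun z : R2 => ‖z‖ ^ (-α)) (ball 0 R) :=
    (h.integrableOn_isCompact (isCompact_closedBall 0 R)).mono_set ball_subset_closedBall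
  have h3 : IntegrableOn (fun z : R2 => ‖z - p‖ ^ (-α)) (ball p R) := by
    have := (measurePreserving_sub_right volume p).integrableOn_comp_preimage
      (MeasurableEquiv.subRight p).measurableEmbedding (f := fun z : R2 => ‖z‖ ^ (-α)) (s := ball 0 R)
    have h4 := this.2 h2
    have h5 : (fun x : R2 => x - p) ⁻¹' ball 0 R = ball p R := by
      ext z; simp [dist_eq_norm]
    rw [h5] at h4
    exact h4
  exact h3.mono_set hR

lemma integral_pow_bound (Ω : Set R2) (hb : Bornology.IsBounded Ω) (α : ℝ) (hα : α < 2) :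
    ∃ C : ℝ, 0 ≤ C ∧ ∀ p ∈ Ω, ∫ z in Ω, ‖z - p‖ ^ (-α) ≤ C := by
  obtain ⟨R, hR⟩ := hb.subset_ball 0
  refine ⟨∫ z in ball (0 : R2) (2*R), ‖z - 0‖ ^ (-α), ?_, ?_⟩
  · exact integral_nonneg (fun z => Real.rpow_nonneg (norm_nonneg _) _)
  intro p hp
  have h5 : (fun x : R2 => x - p) ⁻¹' ball 0 (2*R) = ball p (2*R) := by
      ext z; simp [dist_eq_norm]
  have h1 : ∫ z in ball (0 : R2) (2*R), ‖z - 0‖ ^ (-α) = ∫ z in ball p (2*R), ‖z - p‖ ^ (-α) := by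
    have := (measurePreserving_sub_right volume p).setIntegral_preimage_emb
      (MeasurableEquiv.subRight p).measurableEmbedding (fun z : R2 => ‖z‖ ^ (-α)) (ball 0 (2*R))
    rw [h5] at this
    simp only [sub_zero]
    exact this.symm
  rw [h1]
  apply setIntegral_mono_set
  · exact integrable_pow _ isBounded_ball p α hα
  · filter_upwards with z using Real.rpow_nonneg (norm_nonneg _) _
  · apply LE.le.eventuallyLE
    intro z hz
    have h1 := hR hz
    have h2 := hR hp
    simp only [mem_ball, dist_zero_right] at h1 h2 ⊢
    rw [dist_eq_norm]
    linarith [norm_sub_le z p]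

lemma integrable_inv (Ω : Set R2) (hb : Bornology.IsBounded Ω) (p : R2) :
    IntegrableOn (fun z : R2 => ‖z - p‖⁻¹) Ω := by
  have := integrable_pow Ω hb p 1 (by norm_num)
  simpa [Real.rpow_neg_one] using this

lemma ae_ne (Ω : Set R2) (p : R2) : ∀ᵐ z ∂(volume.restrict Ω), z ≠ p := by
  apply ae_restrict_of_ae
  have : volume ({p} : Set R2) = 0 := by simp
  exact compl_mem_ae_iff.2 this

lemma coord_le (z p : R2) (i : Fin 2) : |z i - p i| ≤ ‖z - p‖ := by
  have := PiLp.norm_apply_le (z - p) i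
  simpa using this

lemma normsq (z p : R2) : ‖z - p‖ ^ 2 = (z 0 - p 0) ^ 2 + (z 1 - p 1) ^ 2 := by
  rw [EuclideanSpace.norm_sq_eq]; simp

lemma vv_le (p z : R2) (i : Fin 2) : |vv p i z| ≤ 1 := by
  unfold vv
  rw [abs_div, abs_norm]
  exact div_le_one_of_le₀ (coord_le z p i) (norm_nonneg _)

lemma vr_le {δ : ℝ} (hδ : 0 < δ) (p z : R2) (i : Fin 2) : |vr δ p i z| ≤ 1 := by
  unfold vr
  rw [abs_div, abs_of_nonneg (Real.sqrt_nonneg _)]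
  apply div_le_one_of_le₀ _ (Real.sqrt_nonneg _)
  apply (coord_le z p i).trans
  apply Real.le_sqrt_of_sq_le
  linarith

lemma Dvr_le {δ : ℝ} (hδ : 0 < δ) (p z : R2) (hz : z ≠ p) (i j : Fin 2) : |Dvr δ p i j z| ≤ 2 * ‖z - p‖⁻¹ := by
  unfold Dvr
  have hr : 0 < ‖z - p‖ := norm_pos_iff.2 (sub_ne_zero.2 hz)
  set ρ := √(‖z - p‖ ^ 2 + δ) with hρ
  have h1 : ‖z - p‖ ≤ ρ := Real.le_sqrt_of_sq_le (by linarith)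
  have hρ0 : 0 < ρ := by linarith
  have h2 : ρ⁻¹ ≤ ‖z - p‖⁻¹ := inv_anti₀ hr h1
  have h3 : |(if i = j then 1 else 0) / ρ| ≤ ρ⁻¹ := by
    split_ifs
    · rw [one_div, abs_of_pos (by positivity)]
    · simp [hρ0.le]
  have h4 : |(z i - p i) * (z j - p j) / ρ ^ 3| ≤ ρ⁻¹ := by
    rw [abs_div, abs_mul, abs_of_pos (by positivity : 0 < ρ ^ 3), div_le_iff₀ (by positivity)]
    have : ρ⁻¹ * ρ ^ 3 = ρ * ρ := by field_simp
    rw [this]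
    exact mul_le_mul ((coord_le z p i).trans h1) ((coord_le z p j).trans h1) (abs_nonneg _) hρ0.le
  exact (abs_sub _ _).trans (by linarith)

lemma vr_contDiff {δ : ℝ} (hδ : 0 < δ) (p : R2) (i : Fin 2) : ContDiff ℝ (⊤ : ℕ∞) (vr δ p i) := by
  unfold vr
  apply ContDiff.div
  · fun_prop
  · apply ContDiff.sqrt
    · exact ((contDiff_id.sub contDiff_const).norm_sq ℝ).add contDiff_const
    · intro z; positivity
  · intro z; positivity

lemma vr_fderiv {δ : ℝ} (hδ : 0 < δ) (p : R2) (i j : Fin 2) (z : R2) :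
    fderiv ℝ (vr δ p i) z (EuclideanSpace.single j 1) = Dvr δ p i j z := by
  have hpos : 0 < ‖z - p‖ ^ 2 + δ := by positivity
  have hd : DifferentiableAt ℝ (vr δ p i) z := (vr_contDiff hδ p i).differentiable (by simp) z
  have h1 := hd.hasFDerivAt.hasLineDerivAt (EuclideanSpace.single j 1)
  refine h1.unique ?_
  unfold HasLineDerivAt
  have hf : (fun t : ℝ => vr δ p i (z + t • EuclideanSpace.single j 1)) =
      fun t : ℝ => ((z i - p i) + t * (if i = j then 1 else 0)) /
        √(‖z - p‖ ^ 2 + 2 * t * (z j - p j) + t ^ 2 + δ) := by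
    ext t
    unfold vr
    congr 1
    · simp; ring
    · congr 2
      rw [normsq, normsq]
      fin_cases j <;> simp <;> ring
  rw [hf]
  have hg : HasDerivAt (fun t : ℝ => ‖z - p‖ ^ 2 + 2 * t * (z j - p j) + t ^ 2 + δ)
      (2 * (z j - p j)) 0 := by
    have := ((((((hasDerivAt_id (0:ℝ)).const_mul 2).mul_const (z j - p j)).const_add (‖z - p‖ ^ 2)).add
      ((hasDerivAt_id (0:ℝ)).pow 2)).add_const δ)
    convert! this using 1
    simp
  have hs := hg.sqrt (by simpa using hpos.ne')
  have hn : HasDerivAt (fun t : ℝ => ((z i - p i) + t * (if i = j then 1 else 0)))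
      (if i = j then 1 else 0) 0 := by
    have := (((hasDerivAt_id (0:ℝ)).mul_const (if i = j then (1:ℝ) else 0)).const_add (z i - p i))
    convert! this using 1
    simp
  have := hn.div hs (by simpa using (Real.sqrt_pos.2 hpos).ne')
  convert! this using 1
  unfold Dvr
  simp only [mul_zero, zero_mul, add_zero, ne_eq, OfNat.ofNat_ne_zero, not_false_eq_true, zero_pow]
  have hρ := Real.sqrt_pos.2 hpos
  field_simp

lemma vr_tendsto (p z : R2) (hz : z ≠ p) (i : Fin 2) :
    Tendsto (fun δ => vr δ p i z) (𝓝[>] 0) (𝓝 (vv p i z)) := by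
  have hr : 0 < ‖z - p‖ := norm_pos_iff.2 (sub_ne_zero.2 hz)
  have hs : Tendsto (fun δ : ℝ => √(‖z - p‖ ^ 2 + δ)) (𝓝[>] 0) (𝓝 ‖z - p‖) := by
    have : Continuous (fun δ : ℝ => √(‖z - p‖ ^ 2 + δ)) := by fun_prop
    have h := (this.tendsto 0).mono_left (nhdsWithin_le_nhds (s := Ioi 0))
    simpa [Real.sqrt_sq hr.le] using h
  exact tendsto_const_nhds.div hs hr.ne'

lemma Dvr_tendsto (p z : R2) (hz : z ≠ p) (i j : Fin 2) :
    Tendsto (fun δ => Dvr δ p i j z) (𝓝[>] 0) (𝓝 (Dv p i j z)) := by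
  have hr : 0 < ‖z - p‖ := norm_pos_iff.2 (sub_ne_zero.2 hz)
  have hs : Tendsto (fun δ : ℝ => √(‖z - p‖ ^ 2 + δ)) (𝓝[>] 0) (𝓝 ‖z - p‖) := by
    have : Continuous (fun δ : ℝ => √(‖z - p‖ ^ 2 + δ)) := by fun_prop
    have h := (this.tendsto 0).mono_left (nhdsWithin_le_nhds (s := Ioi 0))
    simpa [Real.sqrt_sq hr.le] using h
  exact (tendsto_const_nhds.div hs hr.ne').sub (tendsto_const_nhds.div (hs.pow 3) (by positivity))

lemma Dv_le (p z : R2) (hz : z ≠ p) (i j : Fin 2) : |Dv p i j z| ≤ 2 * ‖z - p‖⁻¹ := by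
  refine le_of_tendsto (Dvr_tendsto p z hz i j).abs ?_
  filter_upwards [self_mem_nhdsWithin] with δ hδ using Dvr_le hδ p z hz i j

lemma vv_meas (p : R2) (i : Fin 2) : Measurable (vv p i) := by
  unfold vv; fun_prop

lemma Dv_meas (p : R2) (i j : Fin 2) : Measurable (Dv p i j) := by
  unfold Dv; fun_prop

lemma Dv_integrable (Ω : Set R2) (hb : Bornology.IsBounded Ω) (p : R2) (i j : Fin 2) :
    IntegrableOn (Dv p i j) Ω := by
  refine Integrable.mono' ((integrable_inv Ω hb p).const_mul 2) (Dv_meas p i j).aestronglyMeasurable ?_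
  filter_upwards [ae_ne Ω p] with z hz using Dv_le p z hz i j

/-- scalar weak partial derivative -/
def WD (Ω : Set R2) (j : Fin 2) (f g : R2 → ℝ) : Prop :=
  ∀ φ : R2 → ℝ, ContDiff ℝ (⊤ : ℕ∞) φ → HasCompactSupport φ → tsupport φ ⊆ Ω →
      (∫ x in Ω, f x * fderiv ℝ φ x (EuclideanSpace.single j 1)) = - ∫ x in Ω, g x * φ x

lemma test_bdd (φ : R2 → ℝ) (h1 : ContDiff ℝ (⊤ : ℕ∞) φ) (h2 : HasCompactSupport φ) (j : Fin 2) :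
    Continuous (fun x => fderiv ℝ φ x (EuclideanSpace.single j 1)) ∧
    ∃ C : ℝ, (∀ x, |φ x| ≤ C) ∧ ∀ x, |fderiv ℝ φ x (EuclideanSpace.single j 1)| ≤ C := by
  have hc : Continuous (fun x => fderiv ℝ φ x (EuclideanSpace.single j 1)) :=
    (h1.continuous_fderiv (by simp)).clm_apply continuous_const
  refine ⟨hc, ?_⟩
  obtain ⟨C1, hC1⟩ := h2.exists_bound_of_continuous h1.continuous
  obtain ⟨C2, hC2⟩ := (h2.fderiv_apply (𝕜 := ℝ) (EuclideanSpace.single j 1)).exists_bound_of_continuous hc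
  exact ⟨max C1 C2, fun x => (hC1 x).trans (le_max_left _ _), fun x => (hC2 x).trans (le_max_right _ _)⟩

lemma weak_mul (Ω : Set R2) (hb : Bornology.IsBounded Ω)
    (f g : R2 → ℝ) (hf : IntegrableOn f Ω) (hg : IntegrableOn g Ω)
    (hf1 : ∀ᵐ z ∂(volume.restrict Ω), |f z| ≤ 1) (j : Fin 2) (hw : WD Ω j f g) (p : R2) (i : Fin 2) :
    WD Ω j (fun z => f z * vv p i z) (fun z => g z * vv p i z + f z * Dv p i j z) := by
  intro φ h1 h2 h3
  obtain ⟨hc, C, hC1, hC2⟩ := test_bdd φ h1 h2 j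
  have hC0 : 0 ≤ C := (abs_nonneg _).trans (hC1 0)
  -- the regularized identity
  have key : ∀ δ : ℝ, 0 < δ →
      ∫ x in Ω, (f x * (vr δ p i x * fderiv ℝ φ x (EuclideanSpace.single j 1) + φ x * Dvr δ p i j x)
         + g x * (vr δ p i x * φ x)) = 0 := by
    intro δ hδ
    have hv := vr_contDiff hδ p i
    have hs : ContDiff ℝ (⊤ : ℕ∞) (fun x => vr δ p i x * φ x) := hv.mul h1
    have hcs : HasCompactSupport (fun x => vr δ p i x * φ x) := h2.mul_left
    have hts : tsupport (fun x => vr δ p i x * φ x) ⊆ Ω :=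
      (tsupport_mul_subset_right).trans h3
    have h := hw _ hs hcs hts
    obtain ⟨hc', C', hC1', hC2'⟩ := test_bdd _ hs hcs j
    have hfd : ∀ x, fderiv ℝ (fun x => vr δ p i x * φ x) x (EuclideanSpace.single j 1) =
        vr δ p i x * fderiv ℝ φ x (EuclideanSpace.single j 1) + φ x * Dvr δ p i j x := by
      intro x
      rw [fderiv_fun_mul (hv.differentiable (by simp) x) (h1.differentiable (by simp) x)]
      simp [vr_fderiv hδ]
    simp only [← hfd]
    rw [integral_add, h]
    · ring
    · exact hf.mul_bdd (c := C') hc'.aestronglyMeasurable (ae_of_all _ hC2')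
    · exact hg.mul_bdd (c := C') hs.continuous.aestronglyMeasurable (ae_of_all _ hC1')
  have hlim : Tendsto (fun δ => ∫ x in Ω, (f x * (vr δ p i x * fderiv ℝ φ x (EuclideanSpace.single j 1) + φ x * Dvr δ p i j x)
         + g x * (vr δ p i x * φ x))) (𝓝[>] 0)
      (𝓝 (∫ x in Ω, (f x * (vv p i x * fderiv ℝ φ x (EuclideanSpace.single j 1) + φ x * Dv p i j x)
         + g x * (vv p i x * φ x)))) := by
    apply tendsto_integral_filter_of_dominated_convergence
      (fun x => 1 * (1 * C + C * (2 * ‖x - p‖⁻¹)) + |g x| * (1 * C))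
    · filter_upwards [self_mem_nhdsWithin] with δ hδ
      have hv := (vr_contDiff hδ p i).continuous.measurable
      have hD : Measurable (Dvr δ p i j) := by unfold Dvr; fun_prop
      have := h1.continuous.measurable
      have := hc.measurable
      exact ((hf.1.mul (((hv.mul this).add (h1.continuous.measurable.mul hD)).aestronglyMeasurable)).add
        (hg.1.mul (hv.mul h1.continuous.measurable).aestronglyMeasurable))
    · filter_upwards [self_mem_nhdsWithin] with δ hδ
      filter_upwards [hf1, ae_ne Ω p] with x hx hxp
      have e1 := vr_le hδ p x i
      have e2 := Dvr_le hδ p x hxp i j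
      rw [Real.norm_eq_abs]
      refine (abs_add_le _ _).trans ?_
      rw [abs_mul, abs_mul, abs_mul]
      gcongr
      · refine (abs_add_le _ _).trans ?_
        rw [abs_mul, abs_mul]
        gcongr
        · exact hC2 x
        · exact hC1 x
      · exact hC1 x
    · refine Integrable.add ?_ (hg.abs.mul_const _)
      refine Integrable.const_mul (Integrable.add ?_ (((integrable_inv Ω hb p).const_mul 2).const_mul C)) _
      have : volume Ω < ⊤ := hb.measure_lt_top
      exact integrableOn_const this.ne
    · filter_upwards [ae_ne Ω p] with x hxp
      have e1 := vr_tendsto p x hxp i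
      have e2 := Dvr_tendsto p x hxp i j
      exact ((tendsto_const_nhds.mul ((e1.mul tendsto_const_nhds).add (tendsto_const_nhds.mul e2))).add
        (tendsto_const_nhds.mul (e1.mul tendsto_const_nhds)))
  have h0 : ∫ x in Ω, (f x * (vv p i x * fderiv ℝ φ x (EuclideanSpace.single j 1) + φ x * Dv p i j x)
         + g x * (vv p i x * φ x)) = 0 := by
    refine tendsto_nhds_unique hlim ?_
    refine Tendsto.congr' ?_ tendsto_const_nhds
    filter_upwards [self_mem_nhdsWithin] with δ hδ using (key δ hδ).symm
  have i1 : IntegrableOn (fun x => f x * vv p i x * fderiv ℝ φ x (EuclideanSpace.single j 1)) Ω :=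
    (hf.mul_bdd (c := 1) (vv_meas p i).aestronglyMeasurable (ae_of_all _ fun x => vv_le p x i)).mul_bdd
      (c := C) hc.aestronglyMeasurable (ae_of_all _ hC2)
  have i2 : IntegrableOn (fun x => (g x * vv p i x + f x * Dv p i j x) * φ x) Ω :=
    ((hg.mul_bdd (c := 1) (vv_meas p i).aestronglyMeasurable (ae_of_all _ fun x => vv_le p x i)).add
     ((Dv_integrable Ω hb p i j).bdd_mul (c := 1) hf.1 hf1)).mul_bdd
      (c := C) h1.continuous.aestronglyMeasurable (ae_of_all _ hC1)
  rw [eq_neg_iff_add_eq_zero, ← integral_add i1 i2, ← h0]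
  congr 1
  ext x
  ring

def ang (p : R2) (j : Fin 2) (z : R2) : ℝ :=
  if j = 0 then -(z 1 - p 1) / ‖z - p‖ ^ 2 else (z 0 - p 0) / ‖z - p‖ ^ 2

def mulU (s : ℝ) (p : R2) (u : R2 → R2) (z : R2) : R2 :=
  !₂[u z 0 * vv p 0 z - s * (u z 1 * vv p 1 z), s * (u z 0 * vv p 1 z) + u z 1 * vv p 0 z]

def mulG (s : ℝ) (p : R2) (u : R2 → R2) (G : R2 → Matrix (Fin 2) (Fin 2) ℝ) (z : R2) :
    Matrix (Fin 2) (Fin 2) ℝ :=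
  Matrix.of fun i j => if i = 0 then
    (G z 0 j * vv p 0 z + u z 0 * Dv p 0 j z) - s * (G z 1 j * vv p 1 z + u z 1 * Dv p 1 j z)
  else s * (G z 0 j * vv p 1 z + u z 0 * Dv p 1 j z) + (G z 1 j * vv p 0 z + u z 1 * Dv p 0 j z)

lemma vv_sq (p z : R2) (hz : z ≠ p) : vv p 0 z ^ 2 + vv p 1 z ^ 2 = 1 := by
  have hr : 0 < ‖z - p‖ := norm_pos_iff.2 (sub_ne_zero.2 hz)
  unfold vv
  rw [div_pow, div_pow, ← add_div, ← normsq, div_self (by positivity)]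

lemma Dv_eq0 (p z : R2) (hz : z ≠ p) (j : Fin 2) : Dv p 0 j z = - vv p 1 z * ang p j z := by
  have hr : 0 < ‖z - p‖ := norm_pos_iff.2 (sub_ne_zero.2 hz)
  have := normsq z p
  fin_cases j <;> simp [Dv, vv, ang] <;> field_simp <;> linarith

lemma Dv_eq1 (p z : R2) (hz : z ≠ p) (j : Fin 2) : Dv p 1 j z = vv p 0 z * ang p j z := by
  have hr : 0 < ‖z - p‖ := norm_pos_iff.2 (sub_ne_zero.2 hz)
  have := normsq z p
  fin_cases j <;> simp [Dv, vv, ang] <;> field_simp <;> linarith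

lemma sphere_comp {w : R2} (hw : ‖w‖ = 1) : w 0 ^ 2 + w 1 ^ 2 = 1 := by
  have := normsq w 0
  simp [hw] at this
  linarith

lemma comp_sphere {w : R2} (hw : w 0 ^ 2 + w 1 ^ 2 = 1) : ‖w‖ = 1 := by
  have := normsq w 0
  simp [hw] at this
  rcases this with h | h
  · exact h
  · linarith [norm_nonneg w]

lemma sphere_le {w : R2} (hw : ‖w‖ = 1) (i : Fin 2) : |w i| ≤ 1 := by
  have := PiLp.norm_apply_le w i
  rw [hw] at this
  simpa using this

lemma mulU_sphere {s : ℝ} (hs : s ^ 2 = 1) (p z : R2) (hz : z ≠ p) (u : R2 → R2) (hu : ‖u z‖ = 1) :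
    ‖mulU s p u z‖ = 1 := by
  apply comp_sphere
  have h1 := sphere_comp hu
  have h2 := vv_sq p z hz
  simp only [mulU, PiLp.toLp_apply, Matrix.cons_val_zero, Matrix.cons_val_one]
  linear_combination (vv p 0 z ^ 2 + vv p 1 z ^ 2) * h1 + h2 + (u z 1 ^ 2 * vv p 1 z ^ 2 + u z 0 ^ 2 * vv p 1 z ^ 2) * hs

lemma mulG_eq0 {s : ℝ} (hs : s ^ 2 = 1) (p z : R2) (hz : z ≠ p) (u : R2 → R2)
    (G : R2 → Matrix (Fin 2) (Fin 2) ℝ) (j : Fin 2) :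
    mulG s p u G z 0 j = G z 0 j * vv p 0 z - s * (G z 1 j * vv p 1 z) - s * ang p j z * mulU s p u z 1 := by
  simp only [mulG, mulU, PiLp.toLp_apply, Matrix.of_apply, Matrix.cons_val_one, Matrix.cons_val_zero, Dv_eq0 p z hz, Dv_eq1 p z hz,
    if_true]
  linear_combination (u z 0 * vv p 1 z * ang p j z) * hs

lemma mulG_eq1 {s : ℝ} (p z : R2) (hz : z ≠ p) (u : R2 → R2)
    (G : R2 → Matrix (Fin 2) (Fin 2) ℝ) (j : Fin 2) (hs : s ^ 2 = 1) :
    mulG s p u G z 1 j = s * (G z 0 j * vv p 1 z) + G z 1 j * vv p 0 z + s * ang p j z * mulU s p u z 0 := by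
  simp only [mulG, mulU, PiLp.toLp_apply, Matrix.of_apply, Matrix.cons_val_zero, Dv_eq0 p z hz, Dv_eq1 p z hz,
    one_ne_zero, if_false]
  linear_combination (u z 1 * vv p 1 z * ang p j z) * hs

lemma WD_lin (Ω : Set R2) (j : Fin 2) (f1 g1 f2 g2 : R2 → ℝ) (a b : ℝ)
    (i1 : IntegrableOn f1 Ω) (i2 : IntegrableOn f2 Ω) (k1 : IntegrableOn g1 Ω) (k2 : IntegrableOn g2 Ω)
    (h1 : WD Ω j f1 g1) (h2 : WD Ω j f2 g2) :
    WD Ω j (fun z => a * f1 z + b * f2 z) (fun z => a * g1 z + b * g2 z) := by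
  intro φ t1 t2 t3
  obtain ⟨hc, C, hC1, hC2⟩ := test_bdd φ t1 t2 j
  have e1 := i1.mul_bdd (c := C) hc.aestronglyMeasurable (ae_of_all _ hC2)
  have e2 := i2.mul_bdd (c := C) hc.aestronglyMeasurable (ae_of_all _ hC2)
  have e3 := k1.mul_bdd (c := C) t1.continuous.aestronglyMeasurable (ae_of_all _ hC1)
  have e4 := k2.mul_bdd (c := C) t1.continuous.aestronglyMeasurable (ae_of_all _ hC1)
  have := h1 φ t1 t2 t3
  have := h2 φ t1 t2 t3
  simp only [add_mul, mul_assoc]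
  rw [integral_add (e1.const_mul a) (e2.const_mul b), integral_add (e3.const_mul a) (e4.const_mul b),
    integral_const_mul, integral_const_mul, integral_const_mul, integral_const_mul, h1 φ t1 t2 t3, h2 φ t1 t2 t3]
  ring

lemma step_W11 (Ω : Set R2) (hb : Bornology.IsBounded Ω) (u : R2 → R2)
    (G : R2 → Matrix (Fin 2) (Fin 2) ℝ) (hu : MemW11 Ω u G) (hS : SphereValued Ω u)
    (p : R2) (s : ℝ) (hs : s ^ 2 = 1) :
    MemW11 Ω (mulU s p u) (mulG s p u G) ∧ SphereValued Ω (mulU s p u) := by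
  obtain ⟨hu1, hG, hw⟩ := hu
  have hS' : SphereValued Ω (mulU s p u) := by
    filter_upwards [hS, ae_ne Ω p] with z h1 h2 using mulU_sphere hs p z h2 u h1
  have hui : ∀ i, IntegrableOn (fun z => u z i) Ω := fun i => hu1.eval_piLp i
  have hub : ∀ i, ∀ᵐ z ∂(volume.restrict Ω), |u z i| ≤ 1 := by
    intro i
    filter_upwards [hS] with z h1 using sphere_le h1 i
  have huv : ∀ i k, IntegrableOn (fun z => u z i * vv p k z) Ω := fun i k =>
    (hui i).mul_bdd (c := 1) (vv_meas p k).aestronglyMeasurable (ae_of_all _ fun x => vv_le p x k)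
  have hGv : ∀ i j k, IntegrableOn (fun z => G z i j * vv p k z + u z i * Dv p k j z) Ω := fun i j k =>
    ((hG i j).mul_bdd (c := 1) (vv_meas p k).aestronglyMeasurable (ae_of_all _ fun x => vv_le p x k)).add
    ((Dv_integrable Ω hb p k j).bdd_mul (c := 1) (hui i).1 (hub i))
  have hWD : ∀ i j k, WD Ω j (fun z => u z i * vv p k z) (fun z => G z i j * vv p k z + u z i * Dv p k j z) :=
    fun i j k => weak_mul Ω hb (fun z => u z i) (fun z => G z i j) (hui i) (hG i j) (hub i) j
      (fun φ a b c => hw φ a b c i j) p k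
  refine ⟨⟨?_, ?_, ?_⟩, hS'⟩
  · apply Integrable.of_eval_piLp
    intro i
    fin_cases i
    · have := (huv 0 0).sub ((huv 1 1).const_mul s)
      simp only [mulU, mulG, Fin.zero_eta, Fin.mk_one, Matrix.of_apply, PiLp.toLp_apply, Matrix.cons_val_zero, Matrix.cons_val_one, one_ne_zero, if_true, if_false]
      exact this
    · have := ((huv 0 1).const_mul s).add (huv 1 0)
      simp only [mulU, mulG, Fin.zero_eta, Fin.mk_one, Matrix.of_apply, PiLp.toLp_apply, Matrix.cons_val_zero, Matrix.cons_val_one, one_ne_zero, if_true, if_false]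
      exact this
  · intro i j
    fin_cases i
    · have := (hGv 0 j 0).sub ((hGv 1 j 1).const_mul s)
      simp only [mulU, mulG, Fin.zero_eta, Fin.mk_one, Matrix.of_apply, PiLp.toLp_apply, Matrix.cons_val_zero, Matrix.cons_val_one, one_ne_zero, if_true, if_false]
      exact this
    · have := ((hGv 0 j 1).const_mul s).add (hGv 1 j 0)
      simp only [mulU, mulG, Fin.zero_eta, Fin.mk_one, Matrix.of_apply, PiLp.toLp_apply, Matrix.cons_val_zero, Matrix.cons_val_one, one_ne_zero, if_true, if_false]
      exact this
  · intro φ a b c i j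
    fin_cases i
    · have := WD_lin Ω j _ _ _ _ 1 (-s) (huv 0 0) (huv 1 1) (hGv 0 j 0) (hGv 1 j 1) (hWD 0 j 0) (hWD 1 j 1) φ a b c
      simpa [mulG, mulU, ← sub_eq_add_neg] using this
    · have := WD_lin Ω j _ _ _ _ s 1 (huv 0 1) (huv 1 0) (hGv 0 j 1) (hGv 1 j 0) (hWD 0 j 1) (hWD 1 j 0) φ a b c
      simpa [mulG, mulU] using this

lemma lambda_step {s : ℝ} (hs : s ^ 2 = 1) (p z : R2) (hz : z ≠ p) (u : R2 → R2) (hu : ‖u z‖ = 1)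
    (G : R2 → Matrix (Fin 2) (Fin 2) ℝ) (j : Fin 2) :
    lambdaVec (mulU s p u) (mulG s p u G) z j = lambdaVec u G z j - s / 2 * ((z j - p j) / ‖z - p‖ ^ 2) := by
  have h1 := sphere_comp hu
  have h2 := vv_sq p z hz
  have h3 := sphere_comp (mulU_sphere hs p z hz u hu)
  have e0 : mulU s p u z 0 = u z 0 * vv p 0 z - s * (u z 1 * vv p 1 z) := by simp [mulU]
  have e1 : mulU s p u z 1 = s * (u z 0 * vv p 1 z) + u z 1 * vv p 0 z := by simp [mulU]
  have g0 : ang p 1 z = (z 0 - p 0) / ‖z - p‖ ^ 2 := by simp [ang]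
  have g1 : ang p 0 z = - ((z 1 - p 1) / ‖z - p‖ ^ 2) := by simp [ang]; ring
  fin_cases j
  · simp only [lambdaVec, mulG_eq0 hs p z hz, mulG_eq1 p z hz u G _ hs]
    simp [-one_div]
    rw [← g0]
    generalize ang p 1 z = A at *
    generalize vv p 0 z = a at *
    generalize vv p 1 z = b at *
    have key : -(mulU s p u z 0) * (s * (G z 0 1 * b) + G z 1 1 * a) + mulU s p u z 1 * (G z 0 1 * a - s * (G z 1 1 * b))
      = - u z 0 * G z 1 1 + u z 1 * G z 0 1 := by
      rw [e0, e1]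
      linear_combination (u z 1 * G z 0 1 - u z 0 * G z 1 1) * h2 + (u z 1 * G z 0 1 * b^2 - u z 0 * G z 1 1 * b ^ 2) * hs
    linear_combination (1/2) * key - (1/2) * s * A * h3
  · simp only [lambdaVec, mulG_eq0 hs p z hz, mulG_eq1 p z hz u G _ hs]
    simp [-one_div]
    rw [← neg_eq_iff_eq_neg.2 g1]
    generalize ang p 0 z = A at *
    generalize vv p 0 z = a at *
    generalize vv p 1 z = b at *
    have key : -(mulU s p u z 0) * (s * (G z 0 0 * b) + G z 1 0 * a) + mulU s p u z 1 * (G z 0 0 * a - s * (G z 1 0 * b))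
      = - u z 0 * G z 1 0 + u z 1 * G z 0 0 := by
      rw [e0, e1]
      linear_combination (u z 1 * G z 0 0 - u z 0 * G z 1 0) * h2 + (u z 1 * G z 0 0 * b^2 - u z 0 * G z 1 0 * b ^ 2) * hs
    linear_combination (-1/2) * key + (1/2) * s * A * h3

lemma seg_frontier (Ω t : Set R2) (ht : IsPreconnected t) (h1 : (t ∩ Ω).Nonempty) (h2 : (t ∩ Ωᶜ).Nonempty) :
    (t ∩ frontier Ω).Nonempty := by
  by_contra hne
  rw [not_nonempty_iff_eq_empty] at hne
  have hn : ∀ w ∈ t, w ∉ frontier Ω := fun w hw hf => by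
    have : w ∈ t ∩ frontier Ω := ⟨hw, hf⟩
    rw [hne] at this
    exact this
  obtain ⟨a, ha1, ha2⟩ := h1
  obtain ⟨b, hb1, hb2⟩ := h2
  have hcov : ∀ w ∈ t, w ∈ interior Ω ∨ w ∈ (closure Ω)ᶜ := by
    intro w hw
    by_contra hc
    push Not at hc
    exact hn w hw ⟨by simpa using hc.2, hc.1⟩
  have hA : a ∈ interior Ω := (hcov a ha1).resolve_right (fun h => h (subset_closure ha2))
  have hB : b ∈ (closure Ω)ᶜ := (hcov b hb1).resolve_left (fun h => hb2 (interior_subset h))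
  obtain ⟨w, _, hw1, hw2⟩ := ht _ _ isOpen_interior isClosed_closure.isOpen_compl hcov ⟨a, ha1, hA⟩ ⟨b, hb1, hB⟩
  exact hw2 (subset_closure (interior_subset hw1))

lemma ext_lip (Ω : Set R2) (φ : R2 → ℝ) (L : ℝ≥0) (hL : LipschitzOnWith L φ (closure Ω))
    (h0 : ∀ p ∈ frontier Ω, φ p = 0) : LipschitzWith L (Ω.indicator φ) := by
  have key : ∀ x ∈ Ω, ∀ y ∉ Ω, |φ x| ≤ L * dist x y := by
    intro x hx y hy
    obtain ⟨w, hw1, hw2⟩ := seg_frontier Ω _ (convex_segment (𝕜 := ℝ) x y).isPreconnected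
      ⟨x, left_mem_segment ℝ x y, hx⟩ ⟨y, right_mem_segment ℝ x y, hy⟩
    have h1 := hL.dist_le_mul x (subset_closure hx) w (frontier_subset_closure hw2)
    rw [h0 w hw2, Real.dist_eq, sub_zero] at h1
    have h2 := dist_add_dist_of_mem_segment hw1
    refine h1.trans (mul_le_mul_of_nonneg_left ?_ L.2)
    linarith [dist_nonneg (x := w) (y := y)]
  apply LipschitzWith.of_dist_le_mul
  intro x y
  by_cases hx : x ∈ Ω <;> by_cases hy : y ∈ Ω
  · simp only [hx, hy, indicator_of_mem]
    exact hL.dist_le_mul x (subset_closure hx) y (subset_closure hy)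
  · simp only [hx, hy, indicator_of_mem, not_false_eq_true, indicator_of_notMem, Real.dist_eq, sub_zero]
    exact key x hx y hy
  · simp only [hx, hy, indicator_of_mem, not_false_eq_true, indicator_of_notMem, Real.dist_eq, zero_sub, abs_neg]
    rw [dist_comm]
    exact key y hy x hx
  · simp only [hx, hy, not_false_eq_true, indicator_of_notMem, dist_self]
    positivity

lemma fderiv_zero_ae (ψ : R2 → ℝ) (L : ℝ≥0) (hL : LipschitzWith L ψ) :
    ∀ᵐ z, ψ z = 0 → fderiv ℝ ψ z = 0 := by
  have hL' : LipschitzWith L (fun z => |ψ z|) := by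
    have := (lipschitzWith_one_norm (E := ℝ)).comp hL
    rw [one_mul] at this
    exact this
  filter_upwards [hL.ae_differentiableAt, hL'.ae_differentiableAt] with z h1 h2 h3
  have hmin : IsLocalMin (fun z => |ψ z|) z := by
    filter_upwards with w
    simp [h3]
  have hd : HasFDerivAt (fun z => |ψ z|) (0 : R2 →L[ℝ] ℝ) z := by
    have := h2.hasFDerivAt
    rwa [hmin.fderiv_eq_zero] at this
  have : HasFDerivAt ψ (0 : R2 →L[ℝ] ℝ) z := by
    rw [hasFDerivAt_iff_isLittleO_nhds_zero] at hd ⊢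
    simp only [h3, abs_zero, _root_.zero_apply, sub_zero] at hd ⊢
    exact hd.of_norm_left
  exact this.fderiv

def Xc (c : ℝ) (p : R2) (j : Fin 2) (z : R2) : ℝ := c ^ 2 * (z j - p j) / (1 + c ^ 2 * ‖z - p‖ ^ 2)

lemma Xc_lip (c : ℝ) (p : R2) (j : Fin 2) : LipschitzWith (Real.toNNReal (3 * c ^ 2)) (Xc c p j) := by
  apply LipschitzWith.of_dist_le_mul
  intro z w
  rw [Real.coe_toNNReal _ (by positivity), Real.dist_eq, dist_eq_norm]
  unfold Xc
  set a := ‖z - p‖ with ha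
  set b := ‖w - p‖ with hb
  have h1 : |z j - w j| ≤ ‖z - w‖ := coord_le z w j
  have h2 : |w j - p j| ≤ b := coord_le w p j
  have h3 : |b - a| ≤ ‖z - w‖ := by
    have := abs_norm_sub_norm_le (w - p) (z - p)
    rw [sub_sub_sub_cancel_right, norm_sub_rev w z] at this
    exact this
  have ha0 : 0 ≤ a := norm_nonneg _
  have hb0 : 0 ≤ b := norm_nonneg _
  have hA : 0 < 1 + c ^ 2 * a ^ 2 := by positivity
  have hB : 0 < 1 + c ^ 2 * b ^ 2 := by positivity
  have e : c ^ 2 * (z j - p j) / (1 + c ^ 2 * a ^ 2) - c ^ 2 * (w j - p j) / (1 + c ^ 2 * b ^ 2)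
      = c ^ 2 * ((z j - w j) / (1 + c ^ 2 * a ^ 2) +
        c ^ 2 * (w j - p j) * (b + a) * (b - a) / ((1 + c ^ 2 * a ^ 2) * (1 + c ^ 2 * b ^ 2))) := by
    field_simp; ring
  rw [e, abs_mul, abs_of_nonneg (by positivity : 0 ≤ c ^ 2)]
  have b1 : |(z j - w j) / (1 + c ^ 2 * a ^ 2)| ≤ ‖z - w‖ := by
    rw [abs_div, abs_of_pos hA]
    exact (div_le_self (abs_nonneg _) (by nlinarith [mul_nonneg (sq_nonneg c) (sq_nonneg a)])).trans h1
  have b2 : |c ^ 2 * (w j - p j) * (b + a) * (b - a) / ((1 + c ^ 2 * a ^ 2) * (1 + c ^ 2 * b ^ 2))|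
      ≤ 2 * ‖z - w‖ := by
    rw [abs_div, abs_of_pos (mul_pos hA hB), div_le_iff₀ (mul_pos hA hB), abs_mul, abs_mul, abs_mul,
      abs_of_nonneg (by positivity : 0 ≤ c ^ 2), abs_of_nonneg (by positivity : 0 ≤ b + a)]
    have : c ^ 2 * |w j - p j| * (b + a) * |b - a| ≤ c ^ 2 * b * (b + a) * ‖z - w‖ := by gcongr
    refine this.trans ?_
    have k : c ^ 2 * b * (b + a) ≤ 2 * ((1 + c ^ 2 * a ^ 2) * (1 + c ^ 2 * b ^ 2)) := by
      nlinarith [mul_nonneg (sq_nonneg c) (sq_nonneg (a - b)), mul_nonneg (sq_nonneg c) (sq_nonneg a),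
        mul_nonneg (sq_nonneg c) (sq_nonneg b), mul_nonneg (mul_nonneg (sq_nonneg c) (sq_nonneg a)) (mul_nonneg (sq_nonneg c) (sq_nonneg b))]
    nlinarith [mul_le_mul_of_nonneg_right k (norm_nonneg (z - w))]
  have := abs_add_le ((z j - w j) / (1 + c ^ 2 * a ^ 2)) (c ^ 2 * (w j - p j) * (b + a) * (b - a) / ((1 + c ^ 2 * a ^ 2) * (1 + c ^ 2 * b ^ 2)))
  have h := mul_le_mul_of_nonneg_left (this.trans (add_le_add b1 b2)) (by positivity : 0 ≤ c ^ 2)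
  linarith

lemma Xc_lineDeriv (c : ℝ) (p : R2) (j : Fin 2) (z : R2) :
    lineDeriv ℝ (Xc c p j) z (EuclideanSpace.single j 1) =
      c ^ 2 / (1 + c ^ 2 * ‖z - p‖ ^ 2) - 2 * c ^ 4 * (z j - p j) ^ 2 / (1 + c ^ 2 * ‖z - p‖ ^ 2) ^ 2 := by
  apply HasLineDerivAt.lineDeriv
  unfold HasLineDerivAt
  have hpos : 0 < 1 + c ^ 2 * ‖z - p‖ ^ 2 := by positivity
  have hf : (fun t : ℝ => Xc c p j (z + t • EuclideanSpace.single j 1)) =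
      fun t : ℝ => (c ^ 2 * ((z j - p j) + t)) /
        (1 + c ^ 2 * (‖z - p‖ ^ 2 + 2 * t * (z j - p j) + t ^ 2)) := by
    ext t
    unfold Xc
    congr 1
    · simp only [PiLp.add_apply, PiLp.smul_apply, EuclideanSpace.single, PiLp.single_apply, if_true, smul_eq_mul]; ring
    · congr 2
      rw [normsq, normsq]
      fin_cases j <;> simp <;> ring
  rw [hf]
  have hg : HasDerivAt (fun t : ℝ => 1 + c ^ 2 * (‖z - p‖ ^ 2 + 2 * t * (z j - p j) + t ^ 2))
      (c ^ 2 * (2 * (z j - p j))) 0 := by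
    have := (((((((hasDerivAt_id (0:ℝ)).const_mul 2).mul_const (z j - p j)).const_add (‖z - p‖ ^ 2)).add
      ((hasDerivAt_id (0:ℝ)).pow 2)).const_mul (c ^ 2)).const_add 1)
    convert! this using 1
    simp
  have hn : HasDerivAt (fun t : ℝ => (c ^ 2 * ((z j - p j) + t))) (c ^ 2) 0 := by
    have := (((hasDerivAt_id (0:ℝ))).const_add (z j - p j)).const_mul (c ^ 2)
    convert! this using 1
    simp
  have := hn.div hg (by simpa using hpos.ne')
  convert! this using 1
  simp only [mul_zero, zero_mul, add_zero, ne_eq, OfNat.ofNat_ne_zero, not_false_eq_true, zero_pow]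
  field_simp

lemma integral_peak : ∫ x : R2, (Real.pi)⁻¹ / (1 + ‖x‖ ^ 2) ^ 2 = 1 := by
  have h := integral_fun_norm_addHaar (volume : Measure R2) (fun t : ℝ => (Real.pi)⁻¹ / (1 + t ^ 2) ^ 2)
  rw [h]
  have hv : (volume : Measure R2).real (ball 0 1) = Real.pi := by
    rw [Measure.real, EuclideanSpace.volume_ball_fin_two]
    simp [Real.pi_pos.le]
  have hd : ∀ x ∈ Ici (0:ℝ), HasDerivAt (fun t : ℝ => - ((2 * Real.pi)⁻¹ * (1 + t ^ 2)⁻¹))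
      (x ^ (2 - 1) * ((Real.pi)⁻¹ / (1 + x ^ 2) ^ 2)) x := by
    intro x _
    have h1 : HasDerivAt (fun t : ℝ => 1 + t ^ 2) (2 * x) x := by
      have := ((hasDerivAt_id x).pow 2).const_add 1
      convert! this using 1
      simp
    have := ((h1.inv (by positivity)).const_mul (2 * Real.pi)⁻¹).neg
    convert! this using 1
    have := Real.pi_pos
    field_simp
    simp
  have ht : Tendsto (fun t : ℝ => - ((2 * Real.pi)⁻¹ * (1 + t ^ 2)⁻¹)) atTop (𝓝 0) := by
    have h1 : Tendsto (fun t : ℝ => (1 + t ^ 2)⁻¹) atTop (𝓝 0) :=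
      tendsto_inv_atTop_zero.comp (tendsto_atTop_add_const_left _ _ (tendsto_pow_atTop (by norm_num)))
    simpa using (h1.const_mul (2 * Real.pi)⁻¹).neg
  have hi := integral_Ioi_of_hasDerivAt_of_nonneg' hd (fun x hx => by
    have : (0:ℝ) < x := hx
    have := Real.pi_pos
    positivity) ht
  have hf : Module.finrank ℝ R2 = 2 := by simp
  rw [hf, hv]
  simp only [smul_eq_mul]
  rw [hi]
  have := Real.pi_pos
  simp

lemma peak_decay : Tendsto (fun x : R2 => ‖x‖ ^ Module.finrank ℝ R2 * ((Real.pi)⁻¹ / (1 + ‖x‖ ^ 2) ^ 2))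
    (Bornology.cobounded R2) (𝓝 0) := by
  have hf : Module.finrank ℝ R2 = 2 := by simp
  rw [hf]
  have h1 : Tendsto (fun t : ℝ => (Real.pi)⁻¹ * (1 + t ^ 2)⁻¹) atTop (𝓝 0) := by
    have : Tendsto (fun t : ℝ => (1 + t ^ 2)⁻¹) atTop (𝓝 0) :=
      tendsto_inv_atTop_zero.comp (tendsto_atTop_add_const_left _ _ (tendsto_pow_atTop (by norm_num)))
    simpa using this.const_mul (Real.pi)⁻¹
  refine squeeze_zero (fun x => ?_) (fun x => ?_) (h1.comp tendsto_norm_cobounded_atTop)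
  · have := Real.pi_pos; positivity
  · simp only [Function.comp]
    have := Real.pi_pos
    have h : ‖x‖ ^ 2 * (Real.pi⁻¹ / (1 + ‖x‖ ^ 2) ^ 2) = Real.pi⁻¹ * (1 + ‖x‖ ^ 2)⁻¹ * (‖x‖ ^ 2 / (1 + ‖x‖ ^ 2)) := by
      field_simp
    rw [h]
    apply mul_le_of_le_one_right (by positivity)
    rw [div_le_one (by positivity)]
    linarith

lemma Xc_le (c : ℝ) (p z : R2) (hz : z ≠ p) (j : Fin 2) : |Xc c p j z| ≤ ‖z - p‖⁻¹ := by
  have hr : 0 < ‖z - p‖ := norm_pos_iff.2 (sub_ne_zero.2 hz)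
  unfold Xc
  have hA : 0 < 1 + c ^ 2 * ‖z - p‖ ^ 2 := by positivity
  rw [abs_div, abs_of_pos hA, div_le_iff₀ hA, abs_mul, abs_of_nonneg (by positivity : 0 ≤ c ^ 2)]
  have := mul_le_mul_of_nonneg_left (coord_le z p j) (by positivity : 0 ≤ c ^ 2)
  have e : ‖z - p‖⁻¹ * (1 + c ^ 2 * ‖z - p‖ ^ 2) = ‖z - p‖⁻¹ + c ^ 2 * ‖z - p‖ := by field_simp
  rw [e]
  have : 0 < ‖z - p‖⁻¹ := by positivity
  linarith

lemma Xc_tendsto (p z : R2) (hz : z ≠ p) (j : Fin 2) :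
    Tendsto (fun c => Xc c p j z) atTop (𝓝 ((z j - p j) / ‖z - p‖ ^ 2)) := by
  have hr : 0 < ‖z - p‖ := norm_pos_iff.2 (sub_ne_zero.2 hz)
  have h1 : Tendsto (fun c : ℝ => (c ^ 2)⁻¹) atTop (𝓝 0) :=
    tendsto_inv_atTop_zero.comp (tendsto_pow_atTop (by norm_num))
  have h2 : Tendsto (fun c : ℝ => (z j - p j) / ((c ^ 2)⁻¹ + ‖z - p‖ ^ 2)) atTop (𝓝 ((z j - p j) / ‖z - p‖ ^ 2)) := by
    have := (tendsto_const_nhds (x := z j - p j)).div (h1.add_const (‖z - p‖ ^ 2)) (by rw [zero_add]; positivity)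
    rwa [zero_add] at this
  refine h2.congr' ?_
  filter_upwards [eventually_gt_atTop 0] with c hc
  unfold Xc
  field_simp

lemma deg (Ω : Set R2) (ho : IsOpen Ω) (hb : Bornology.IsBounded Ω) (φ : R2 → ℝ) (hφ : MemLip0 Ω φ)
    (p : R2) (hp : p ∈ Ω) :
    (∀ j, IntegrableOn (fun z => (z j - p j) / ‖z - p‖ ^ 2 * fderiv ℝ φ z (EuclideanSpace.single j 1)) Ω) ∧
    ∑ j, ∫ z in Ω, (z j - p j) / ‖z - p‖ ^ 2 * fderiv ℝ φ z (EuclideanSpace.single j 1) = - (2 * Real.pi * φ p) := by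
  obtain ⟨⟨L, hL⟩, h0⟩ := hφ
  set ψ := Ω.indicator φ with hψ
  have hLψ : LipschitzWith L ψ := ext_lip Ω φ L hL h0
  have hcs : HasCompactSupport ψ := by
    apply HasCompactSupport.intro (hb.isCompact_closure)
    intro x hx
    exact indicator_of_notMem (fun h => hx (subset_closure h)) _
  have hfd : ∀ z ∈ Ω, fderiv ℝ φ z = fderiv ℝ ψ z := by
    intro z hz
    apply Filter.EventuallyEq.fderiv_eq
    filter_upwards [ho.mem_nhds hz] with w hw
    simp [hψ, hw]
  have hbd : ∀ z j, |fderiv ℝ ψ z (EuclideanSpace.single j 1)| ≤ L := by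
    intro z j
    have h1 := norm_fderiv_le_of_lipschitz ℝ hLψ (x₀ := z)
    have h2 := (fderiv ℝ ψ z).le_opNorm (EuclideanSpace.single j 1)
    simp at h2
    exact h2.trans h1
  have hz0 := fderiv_zero_ae ψ L hLψ
  have hlim : ∀ j, Tendsto (fun c => ∫ z in Ω, Xc c p j z * fderiv ℝ ψ z (EuclideanSpace.single j 1)) atTop
      (𝓝 (∫ z in Ω, (z j - p j) / ‖z - p‖ ^ 2 * fderiv ℝ ψ z (EuclideanSpace.single j 1))) := by
    intro j
    apply tendsto_integral_filter_of_dominated_convergence (fun z => ‖z - p‖⁻¹ * L)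
    · filter_upwards with c
      exact ((Xc_lip c p j).continuous.measurable.mul
        (measurable_fderiv_apply_const ℝ ψ _)).aestronglyMeasurable
    · filter_upwards with c
      filter_upwards [ae_ne Ω p] with z hz
      rw [Real.norm_eq_abs, abs_mul]
      exact mul_le_mul (Xc_le c p z hz j) (hbd z j) (abs_nonneg _) (by positivity)
    · exact (integrable_inv Ω hb p).mul_const _
    · filter_upwards [ae_ne Ω p] with z hz
      exact (Xc_tendsto p z hz j).mul_const _
  have hid : ∀ c j, ∫ z in Ω, Xc c p j z * fderiv ℝ ψ z (EuclideanSpace.single j 1) =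
      - ∫ z, lineDeriv ℝ (Xc c p j) z (EuclideanSpace.single j 1) * ψ z := by
    intro c j
    rw [LipschitzWith.integral_lineDeriv_mul_eq (Xc_lip c p j) hLψ hcs, ← integral_neg]
    rw [setIntegral_eq_integral_of_ae_compl_eq_zero]
    · apply integral_congr_ae
      filter_upwards [hLψ.ae_differentiableAt] with z hz
      rw [hz.lineDeriv_eq_fderiv, map_neg]
      ring
    · filter_upwards [hz0] with z hz hzΩ
      rw [hz (indicator_of_notMem hzΩ _)]
      simp
  have hintg : ∀ c j, Integrable (fun z => lineDeriv ℝ (Xc c p j) z (EuclideanSpace.single j 1) * ψ z) := by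
    intro c j
    refine (hLψ.continuous.integrable_of_hasCompactSupport hcs).bdd_mul
      (c := (Real.toNNReal (3 * c ^ 2) : ℝ) * ‖(EuclideanSpace.single j 1 : R2)‖) ?_ ?_
    · exact (measurable_lineDeriv (Xc_lip c p j).continuous).aestronglyMeasurable
    · exact ae_of_all _ fun z => norm_lineDeriv_le_of_lipschitz ℝ (Xc_lip c p j)
  have hsum : ∀ c, ∑ j, ∫ z in Ω, Xc c p j z * fderiv ℝ ψ z (EuclideanSpace.single j 1) =
      - (2 * Real.pi * ∫ z, (c ^ Module.finrank ℝ R2 * ((Real.pi)⁻¹ / (1 + ‖c • (p - z)‖ ^ 2) ^ 2)) • ψ z) := by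
    intro c
    simp only [hid]
    rw [Finset.sum_neg_distrib, ← integral_finsetSum _ (fun j _ => hintg c j), ← integral_const_mul]
    congr 2
    ext z
    have hf : Module.finrank ℝ R2 = 2 := by simp
    rw [hf, Fin.sum_univ_two, Xc_lineDeriv, Xc_lineDeriv, norm_smul, mul_pow, Real.norm_eq_abs, sq_abs, norm_sub_rev p z,
      smul_eq_mul]
    have := Real.pi_pos
    have hn := normsq z p
    have hA : 0 < 1 + c ^ 2 * ‖z - p‖ ^ 2 := by positivity
    have h1 : (z 1 - p 1) ^ 2 = ‖z - p‖ ^ 2 - (z 0 - p 0) ^ 2 := by linarith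
    rw [h1]
    field_simp
    ring
  have hpeak := tendsto_integral_comp_smul_smul_of_integrable' (μ := (volume : Measure R2))
    (φ := fun x : R2 => (Real.pi)⁻¹ / (1 + ‖x‖ ^ 2) ^ 2)
    (fun x => by have := Real.pi_pos; positivity) integral_peak peak_decay
    (hLψ.continuous.integrable_of_hasCompactSupport hcs) (hLψ.continuous.continuousAt (x := p))
  have e1 := tendsto_finsetSum Finset.univ (fun j _ => hlim j)
  have e2 := (hpeak.const_mul (2 * Real.pi)).neg
  simp only [hsum] at e1
  have := tendsto_nhds_unique e1 e2
  have hc : ∀ j, EqOn (fun z => (z j - p j) / ‖z - p‖ ^ 2 * fderiv ℝ φ z (EuclideanSpace.single j 1))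
    (fun z => (z j - p j) / ‖z - p‖ ^ 2 * fderiv ℝ ψ z (EuclideanSpace.single j 1)) Ω := by
    intro j z hz
    simp only [hfd z hz]
  constructor
  · intro j
    rw [integrableOn_congr_fun (hc j) ho.measurableSet]
    refine Integrable.mono' ((integrable_inv Ω hb p).mul_const L) ?_ ?_
    · refine (Measurable.mul ?_ (measurable_fderiv_apply_const ℝ ψ _)).aestronglyMeasurable
      fun_prop
    · filter_upwards [ae_ne Ω p] with z hz
      rw [Real.norm_eq_abs, abs_mul]
      refine mul_le_mul ?_ (hbd z j) (abs_nonneg _) (by positivity)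
      exact le_of_tendsto (Xc_tendsto p z hz j).abs (Eventually.of_forall fun c => Xc_le c p z hz j)
  · rw [Finset.sum_congr rfl (fun j _ => setIntegral_congr_fun ho.measurableSet (hc j)), this]
    simp [hψ, hp]

lemma lip_fderiv_bdd (Ω : Set R2) (ho : IsOpen Ω) (φ : R2 → ℝ) (hφ : MemLip0 Ω φ) :
    ∃ C : ℝ, ∀ j, ∀ᵐ z ∂(volume.restrict Ω), ‖fderiv ℝ φ z (EuclideanSpace.single j 1)‖ ≤ C := by
  obtain ⟨⟨L, hL⟩, h0⟩ := hφ
  refine ⟨L, fun j => ?_⟩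
  filter_upwards [ae_restrict_mem ho.measurableSet] with z hz
  have h1 := norm_fderiv_le_of_lipschitzOn ℝ (s := Ω) (ho.mem_nhds hz) (hL.mono subset_closure)
  have h2 := (fderiv ℝ φ z).le_opNorm (EuclideanSpace.single j 1)
  simp at h2
  exact h2.trans h1

lemma lambda_integrable (Ω : Set R2) (u : R2 → R2)
    (G : R2 → Matrix (Fin 2) (Fin 2) ℝ) (hu : MemW11 Ω u G) (hS : SphereValued Ω u) (j : Fin 2) :
    IntegrableOn (fun z => lambdaVec u G z j) Ω := by
  obtain ⟨hu1, hG, hw⟩ := hu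
  have hui : ∀ i, IntegrableOn (fun z => u z i) Ω := fun i => hu1.eval_piLp i
  have hub : ∀ i, ∀ᵐ z ∂(volume.restrict Ω), ‖u z i‖ ≤ 1 := by
    intro i
    filter_upwards [hS] with z h1 using sphere_le h1 i
  have h : ∀ i k l, IntegrableOn (fun z => u z i * G z k l) Ω := fun i k l =>
    (hG k l).bdd_mul (c := 1) (hui i).1 (hub i)
  fin_cases j
  · have := ((h 0 1 1).neg.add (h 1 0 1)).const_mul (1/2)
    refine Integrable.congr this (ae_of_all _ fun z => by simp [lambdaVec])
  · have := ((h 0 1 0).sub (h 1 0 0)).const_mul (1/2)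
    refine Integrable.congr this (ae_of_all _ fun z => by simp [lambdaVec])

lemma step_det (Ω : Set R2) (ho : IsOpen Ω) (hb : Bornology.IsBounded Ω) (u : R2 → R2)
    (G : R2 → Matrix (Fin 2) (Fin 2) ℝ) (hu : MemW11 Ω u G) (hS : SphereValued Ω u)
    (p : R2) (hp : p ∈ Ω) (s : ℝ) (hs : s ^ 2 = 1) (φ : R2 → ℝ) (hφ : MemLip0 Ω φ) :
    detPairing Ω (mulU s p u) (mulG s p u G) φ = detPairing Ω u G φ + s * (Real.pi * φ p) := by
  obtain ⟨hd1, hd2⟩ := deg Ω ho hb φ hφ p hp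
  obtain ⟨C, hC⟩ := lip_fderiv_bdd Ω ho φ hφ
  have hi : ∀ j, IntegrableOn (fun z => lambdaVec u G z j * fderiv ℝ φ z (EuclideanSpace.single j 1)) Ω :=
    fun j => (lambda_integrable Ω u G hu hS j).mul_bdd (c := C)
      (measurable_fderiv_apply_const ℝ φ _).aestronglyMeasurable (hC j)
  unfold detPairing
  have e : ∫ x in Ω, ∑ j, lambdaVec (mulU s p u) (mulG s p u G) x j * fderiv ℝ φ x (EuclideanSpace.single j 1)
      = ∫ x in Ω, (∑ j, lambdaVec u G x j * fderiv ℝ φ x (EuclideanSpace.single j 1)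
        - s / 2 * ∑ j, ((x j - p j) / ‖x - p‖ ^ 2 * fderiv ℝ φ x (EuclideanSpace.single j 1))) := by
    apply integral_congr_ae
    filter_upwards [hS, ae_ne Ω p] with z h1 h2
    simp only [lambda_step hs p z h2 u h1 G, Fin.sum_univ_two]
    ring
  rw [e, integral_sub (integrable_finsetSum _ fun j _ => hi j)
    ((integrable_finsetSum _ fun j _ => hd1 j).const_mul _), integral_const_mul,
    integral_finsetSum _ fun j _ => hd1 j, hd2]
  ring

def DD (u : R2 → R2) (G : R2 → Matrix (Fin 2) (Fin 2) ℝ) (u' : R2 → R2)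
    (G' : R2 → Matrix (Fin 2) (Fin 2) ℝ) (z : R2) : ℝ :=
  ∑ i, |u z i - u' z i| + ∑ i, ∑ j, |G z i j - G' z i j|

lemma DD_integrable (Ω : Set R2) (u : R2 → R2) (G : R2 → Matrix (Fin 2) (Fin 2) ℝ) (hu : MemW11 Ω u G)
    (u' : R2 → R2) (G' : R2 → Matrix (Fin 2) (Fin 2) ℝ) (hu' : MemW11 Ω u' G') :
    IntegrableOn (DD u G u' G') Ω := by
  unfold DD
  refine Integrable.add (integrable_finsetSum _ fun i _ => ?_)
    (integrable_finsetSum _ fun i _ => integrable_finsetSum _ fun j _ => ?_)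
  · exact ((hu.1.eval_piLp i).sub (hu'.1.eval_piLp i)).abs
  · exact ((hu.2.1 i j).sub (hu'.2.1 i j)).abs

lemma DD_triangle (u G u' G' u'' G'') (z : R2) : DD u G u'' G'' z ≤ DD u G u' G' z + DD u' G' u'' G'' z := by
  unfold DD
  simp only [Fin.sum_univ_two]
  have h := fun i => abs_sub_le (u z i) (u' z i) (u'' z i)
  have k := fun i j => abs_sub_le (G z i j) (G' z i j) (G'' z i j)
  linarith [h 0, h 1, k 0 0, k 0 1, k 1 0, k 1 1]

lemma ang_diff (p q z : R2) (hp : z ≠ p) (hq : z ≠ q) (j : Fin 2) :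
    |ang q j z - ang p j z| ≤ √‖q - p‖ * (‖z - q‖ ^ (-(3/2) : ℝ) + ‖z - p‖ ^ (-(3/2) : ℝ)) := by
  have ha : 0 < ‖z - q‖ := norm_pos_iff.2 (sub_ne_zero.2 hq)
  have hb : 0 < ‖z - p‖ := norm_pos_iff.2 (sub_ne_zero.2 hp)
  have h1 := dist_div_norm_sq_smul (sub_ne_zero.2 hq) (sub_ne_zero.2 hp) 1
  have hd : dist (z - q) (z - p) = ‖q - p‖ := by
    rw [dist_eq_norm, sub_sub_sub_cancel_left, norm_sub_rev]
  rw [hd, dist_eq_norm] at h1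
  have h2 : |ang q j z - ang p j z| ≤ 1 ^ 2 / (‖z - q‖ * ‖z - p‖) * ‖q - p‖ := by
    rw [← h1]
    fin_cases j
    · have := PiLp.norm_apply_le ((1 / ‖z - q‖) ^ 2 • (z - q) - (1 / ‖z - p‖) ^ 2 • (z - p)) 1
      refine le_trans (le_of_eq ?_) this
      simp only [ang, PiLp.sub_apply, PiLp.smul_apply, smul_eq_mul, Real.norm_eq_abs, Fin.zero_eta, if_true]
      rw [abs_sub_comm]
      congr 1
      ring
    · have := PiLp.norm_apply_le ((1 / ‖z - q‖) ^ 2 • (z - q) - (1 / ‖z - p‖) ^ 2 • (z - p)) 0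
      refine le_trans (le_of_eq ?_) this
      simp only [ang, PiLp.sub_apply, PiLp.smul_apply, smul_eq_mul, Real.norm_eq_abs, Fin.mk_one, one_ne_zero, if_false]
      congr 1
      ring
  refine h2.trans ?_
  have h3 : ‖q - p‖ ≤ ‖z - q‖ + ‖z - p‖ := by
    have := norm_sub_le (z - p) (z - q)
    rw [sub_sub_sub_cancel_left] at this
    linarith
  generalize ‖z - q‖ = a at *
  generalize ‖z - p‖ = b at *
  set h := ‖q - p‖
  have hh : 0 ≤ h := norm_nonneg _
  set A := √a with hA
  set B := √b with hB
  have hA0 : 0 < A := Real.sqrt_pos.2 ha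
  have hB0 : 0 < B := Real.sqrt_pos.2 hb
  have ea : a = A ^ 2 := (Real.sq_sqrt ha.le).symm
  have eb : b = B ^ 2 := (Real.sq_sqrt hb.le).symm
  have pa : ∀ x : ℝ, 0 < x → x ^ (-(3/2) : ℝ) = (√x ^ 3)⁻¹ := by
    intro x hx
    rw [Real.rpow_neg hx.le, Real.sqrt_eq_rpow, ← Real.rpow_natCast, ← Real.rpow_mul hx.le]
    norm_num
  rw [pa a ha, pa b hb, ← hA, ← hB]
  have hs : √h ≤ A + B := by
    apply Real.sqrt_le_iff.2 ⟨by positivity, ?_⟩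
    nlinarith [mul_pos hA0 hB0]
  have eh : h = √h * √h := (Real.mul_self_sqrt hh).symm
  calc 1 ^ 2 / (a * b) * h = √h * (√h / (A ^ 2 * B ^ 2)) := by
        rw [ea, eb]; nth_rw 1 [eh]; ring
    _ ≤ √h * ((A + B) / (A ^ 2 * B ^ 2)) := by gcongr
    _ ≤ √h * ((A ^ 3)⁻¹ + (B ^ 3)⁻¹) := by
        apply mul_le_mul_of_nonneg_left _ (Real.sqrt_nonneg _)
        have : (A ^ 3)⁻¹ + (B ^ 3)⁻¹ - (A + B) / (A ^ 2 * B ^ 2) = (A + B) * (A - B) ^ 2 / (A ^ 3 * B ^ 3) := by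
          field_simp; ring
        have : 0 ≤ (A + B) * (A - B) ^ 2 / (A ^ 3 * B ^ 3) := by positivity
        linarith

def ww (p q z : R2) : ℝ :=
  |1 - (vv q 0 z * vv p 0 z + vv q 1 z * vv p 1 z)| + |vv q 1 z * vv p 0 z - vv q 0 z * vv p 1 z|

lemma lin_bound (x y c t s r : ℝ) (hs : |s| = 1) :
    |x - (x * c - s * (y * t) - r)| ≤ (|x| + |y|) * (|1 - c| + |t|) + |r| := by
  have e : x - (x * c - s * (y * t) - r) = x * (1 - c) + s * (y * t) + r := by ring
  rw [e]
  refine (abs_add_le _ _).trans (add_le_add_left ((abs_add_le _ _).trans ?_) _)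
  rw [abs_mul, abs_mul, abs_mul, hs]
  nlinarith [mul_nonneg (abs_nonneg x) (abs_nonneg t), mul_nonneg (abs_nonneg y) (abs_nonneg (1 - c))]

lemma lin_bound' (x y c t s r : ℝ) (hs : |s| = 1) :
    |x - (s * (y * t) + x * c + r)| ≤ (|x| + |y|) * (|1 - c| + |t|) + |r| := by
  have := lin_bound x y c t (-s) (-r) (by rwa [abs_neg])
  rw [abs_neg] at this
  refine le_trans (le_of_eq ?_) this
  congr 1; ring

lemma DD_bound {s : ℝ} (hs : s ^ 2 = 1) (p q z : R2) (hp : z ≠ p) (hq : z ≠ q) (u : R2 → R2) (hu : ‖u z‖ = 1)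
    (G : R2 → Matrix (Fin 2) (Fin 2) ℝ) :
    DD u G (mulU (-s) p (mulU s q u)) (mulG (-s) p (mulU s q u) (mulG s q u G)) z ≤
      (4 + 2 * ∑ i, ∑ j, |G z i j|) * ww p q z + 2 * ∑ j, |ang q j z - ang p j z| := by
  have hs1 : |s| = 1 := by
    have := sq_abs s
    rw [hs] at this
    nlinarith [abs_nonneg s]
  have hs' : (-s) ^ 2 = 1 := by rw [neg_sq, hs]
  set c := vv q 0 z * vv p 0 z + vv q 1 z * vv p 1 z with hc
  set t := vv q 1 z * vv p 0 z - vv q 0 z * vv p 1 z with ht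
  set U := mulU (-s) p (mulU s q u) with hU
  have hUs : ‖U z‖ = 1 := mulU_sphere hs' p z hp _ (mulU_sphere hs q z hq u hu)
  have f0 : mulU s q u z 0 = u z 0 * vv q 0 z - s * (u z 1 * vv q 1 z) := by simp [mulU]
  have f1 : mulU s q u z 1 = s * (u z 0 * vv q 1 z) + u z 1 * vv q 0 z := by simp [mulU]
  have U0' : U z 0 = mulU s q u z 0 * vv p 0 z + s * (mulU s q u z 1 * vv p 1 z) := by simp [hU, mulU]
  have U1' : U z 1 = -s * (mulU s q u z 0 * vv p 1 z) + mulU s q u z 1 * vv p 0 z := by simp [hU, mulU]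
  have U0 : U z 0 = u z 0 * c - s * (u z 1 * t) - 0 := by
    rw [U0', f0, f1]; linear_combination (u z 0 * vv q 1 z * vv p 1 z) * hs
  have U1 : U z 1 = s * (u z 0 * t) + u z 1 * c + 0 := by
    rw [U1', f0, f1]; linear_combination (u z 1 * vv q 1 z * vv p 1 z) * hs
  have G0 : ∀ j, mulG (-s) p (mulU s q u) (mulG s q u G) z 0 j =
      G z 0 j * c - s * (G z 1 j * t) - s * (ang q j z - ang p j z) * U z 1 := by
    intro j
    rw [mulG_eq0 hs' p z hp, mulG_eq0 hs q z hq, mulG_eq1 q z hq u G j hs, ← hU, U1']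
    linear_combination (G z 0 j * vv q 1 z * vv p 1 z) * hs
  have G1 : ∀ j, mulG (-s) p (mulU s q u) (mulG s q u G) z 1 j =
      s * (G z 0 j * t) + G z 1 j * c + s * (ang q j z - ang p j z) * U z 0 := by
    intro j
    rw [mulG_eq1 p z hp _ _ _ hs', mulG_eq0 hs q z hq, mulG_eq1 q z hq u G j hs, ← hU, U0']
    linear_combination (G z 1 j * vv q 1 z * vv p 1 z) * hs
  have r : ∀ j i, |s * (ang q j z - ang p j z) * U z i| ≤ |ang q j z - ang p j z| := by
    intro j i
    rw [abs_mul, abs_mul, hs1, one_mul]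
    exact mul_le_of_le_one_right (abs_nonneg _) (sphere_le hUs i)
  have w : ww p q z = |1 - c| + |t| := rfl
  have w0 : 0 ≤ ww p q z := by rw [w]; positivity
  have a0 : |u z 0 - U z 0| ≤ 2 * ww p q z := by
    have := lin_bound (u z 0) (u z 1) c t s 0 hs1
    rw [← U0, ← w, abs_zero, add_zero] at this
    refine this.trans (mul_le_mul_of_nonneg_right ?_ w0)
    linarith [sphere_le hu 0, sphere_le hu 1]
  have a1 : |u z 1 - U z 1| ≤ 2 * ww p q z := by
    have := lin_bound' (u z 1) (u z 0) c t s 0 hs1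
    rw [← U1, ← w, abs_zero, add_zero] at this
    refine this.trans (mul_le_mul_of_nonneg_right ?_ w0)
    linarith [sphere_le hu 0, sphere_le hu 1]
  have b0 : ∀ j, |G z 0 j - mulG (-s) p (mulU s q u) (mulG s q u G) z 0 j| ≤
      (|G z 0 j| + |G z 1 j|) * ww p q z + |ang q j z - ang p j z| := by
    intro j
    rw [G0 j]
    exact (lin_bound _ _ c t s _ hs1).trans (add_le_add_right (r j 1) _)
  have b1 : ∀ j, |G z 1 j - mulG (-s) p (mulU s q u) (mulG s q u G) z 1 j| ≤
      (|G z 1 j| + |G z 0 j|) * ww p q z + |ang q j z - ang p j z| := by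
    intro j
    rw [G1 j]
    exact (lin_bound' _ _ c t s _ hs1).trans (add_le_add_right (r j 0) _)
  unfold DD
  simp only [Fin.sum_univ_two]
  have := b0 0
  have := b0 1
  have := b1 0
  have := b1 1
  linarith

lemma ww_le (p q z : R2) : ww p q z ≤ 5 := by
  have m : ∀ i j, |vv q i z * vv p j z| ≤ 1 := fun i j => by
    rw [abs_mul]; exact mul_le_one₀ (vv_le q z i) (abs_nonneg _) (vv_le p z j)
  have h := fun i j => abs_le.1 (m i j)
  unfold ww
  have h1 : |1 - (vv q 0 z * vv p 0 z + vv q 1 z * vv p 1 z)| ≤ 3 :=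
    abs_le.2 ⟨by linarith [(h 0 0).2, (h 1 1).2], by linarith [(h 0 0).1, (h 1 1).1]⟩
  have h2 : |vv q 1 z * vv p 0 z - vv q 0 z * vv p 1 z| ≤ 2 :=
    abs_le.2 ⟨by linarith [(h 1 0).1, (h 0 1).2], by linarith [(h 1 0).2, (h 0 1).1]⟩
  linarith

lemma ww_tendsto (p z : R2) (hz : z ≠ p) : Tendsto (fun q => ww p q z) (𝓝 p) (𝓝 0) := by
  have hr : ‖z - p‖ ≠ 0 := norm_ne_zero_iff.2 (sub_ne_zero.2 hz)
  have h : ∀ i, ContinuousAt (fun q => vv q i z) p := by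
    intro i
    unfold vv
    refine ContinuousAt.div (f := fun q : R2 => z i - q i) (g := fun q : R2 => ‖z - q‖) ?_ ?_ hr <;> fun_prop
  have h2 : ContinuousAt (fun q => ww p q z) p := by
    unfold ww
    exact (continuousAt_const.sub (((h 0).mul continuousAt_const).add ((h 1).mul continuousAt_const))).abs.add
      (((h 1).mul continuousAt_const).sub ((h 0).mul continuousAt_const)).abs
  have h3 : ww p p z = 0 := by
    have := vv_sq p z hz
    unfold ww
    rw [show vv p 0 z * vv p 0 z + vv p 1 z * vv p 1 z = 1 by linarith,
      show vv p 1 z * vv p 0 z - vv p 0 z * vv p 1 z = 0 by ring]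
    simp
  have := h2.tendsto
  rwa [h3] at this

lemma ww_nonneg (p q z : R2) : 0 ≤ ww p q z := by unfold ww; positivity

lemma ww_meas (p q : R2) : Measurable (ww p q) := by
  have := vv_meas p
  have := vv_meas q
  unfold ww
  exact (measurable_const.sub (((vv_meas q 0).mul (vv_meas p 0)).add ((vv_meas q 1).mul (vv_meas p 1)))).abs.add
    (((vv_meas q 1).mul (vv_meas p 0)).sub ((vv_meas q 0).mul (vv_meas p 1))).abs

lemma close (Ω : Set R2) (ho : IsOpen Ω) (hb : Bornology.IsBounded Ω) (u : R2 → R2)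
    (G : R2 → Matrix (Fin 2) (Fin 2) ℝ) (hu : MemW11 Ω u G) (hS : SphereValued Ω u)
    (p : R2) (hp : p ∈ Ω) (s : ℝ) (hs : s ^ 2 = 1) (η : ℝ) (hη : 0 < η) :
    ∀ᶠ q in 𝓝 p, ∫ z in Ω, DD u G (mulU (-s) p (mulU s q u)) (mulG (-s) p (mulU s q u) (mulG s q u G)) z < η := by
  have hs' : (-s) ^ 2 = 1 := by rw [neg_sq, hs]
  obtain ⟨C, hC0, hC⟩ := integral_pow_bound Ω hb (3/2) (by norm_num)
  have hM : IntegrableOn (fun z => 4 + 2 * ∑ i, ∑ j, |G z i j|) Ω := by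
    refine Integrable.add (integrableOn_const (hb.measure_lt_top).ne) (Integrable.const_mul ?_ _)
    exact integrable_finsetSum _ fun i _ => integrable_finsetSum _ fun j _ => (hu.2.1 i j).abs
  have t1 : Tendsto (fun q => ∫ z in Ω, (4 + 2 * ∑ i, ∑ j, |G z i j|) * ww p q z) (𝓝 p) (𝓝 0) := by
    have := tendsto_integral_filter_of_dominated_convergence (μ := volume.restrict Ω) (l := 𝓝 p)
      (F := fun q z => (4 + 2 * ∑ i, ∑ j, |G z i j|) * ww p q z) (f := fun z => 0)
      (fun z => (4 + 2 * ∑ i, ∑ j, |G z i j|) * 5) ?_ ?_ (hM.mul_const 5) ?_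
    · simpa using this
    · filter_upwards with q
      exact hM.1.mul (ww_meas p q).aestronglyMeasurable
    · filter_upwards with q
      filter_upwards with z
      have h0 : 0 ≤ 4 + 2 * ∑ i, ∑ j, |G z i j| := by positivity
      rw [Real.norm_eq_abs, abs_of_nonneg (mul_nonneg h0 (ww_nonneg p q z))]
      exact mul_le_mul_of_nonneg_left (ww_le p q z) h0
    · filter_upwards [ae_ne Ω p] with z hz
      simpa using (ww_tendsto p z hz).const_mul (4 + 2 * ∑ i, ∑ j, |G z i j|)
  have t2 : Tendsto (fun q : R2 => 4 * √‖q - p‖ * (C + C)) (𝓝 p) (𝓝 0) := by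
    have : Continuous (fun q : R2 => 4 * √‖q - p‖ * (C + C)) := by fun_prop
    have := this.tendsto p
    simpa using this
  have t3 := t1.add t2
  rw [add_zero] at t3
  filter_upwards [t3.eventually (gt_mem_nhds hη), ho.mem_nhds hp] with q hq hqΩ
  refine lt_of_le_of_lt ?_ hq
  have m1 := step_W11 Ω hb u G hu hS q s hs
  have m2 := step_W11 Ω hb _ _ m1.1 m1.2 p (-s) hs'
  have iq := integrable_pow Ω hb q (3/2) (by norm_num)
  have ip := integrable_pow Ω hb p (3/2) (by norm_num)
  have i1 : IntegrableOn (fun z => (4 + 2 * ∑ i, ∑ j, |G z i j|) * ww p q z) Ω := by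
    refine hM.mul_bdd (c := 5) (ww_meas p q).aestronglyMeasurable (ae_of_all _ fun z => ?_)
    rw [Real.norm_eq_abs, abs_of_nonneg (ww_nonneg p q z)]
    exact ww_le p q z
  have i2 : IntegrableOn (fun z => 4 * √‖q - p‖ * (‖z - q‖ ^ (-(3/2) : ℝ) + ‖z - p‖ ^ (-(3/2) : ℝ))) Ω :=
    (iq.add ip).const_mul _
  calc ∫ z in Ω, DD u G (mulU (-s) p (mulU s q u)) (mulG (-s) p (mulU s q u) (mulG s q u G)) z
      ≤ ∫ z in Ω, ((4 + 2 * ∑ i, ∑ j, |G z i j|) * ww p q z +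
          4 * √‖q - p‖ * (‖z - q‖ ^ (-(3/2) : ℝ) + ‖z - p‖ ^ (-(3/2) : ℝ))) := by
        apply integral_mono_ae (DD_integrable Ω _ _ hu _ _ m2.1) (i1.add i2)
        filter_upwards [ae_ne Ω p, ae_ne Ω q, hS] with z h1 h2 h3
        refine (DD_bound hs p q z h1 h2 u h3 G).trans ?_
        have k0 := ang_diff p q z h1 h2 0
        have k1 := ang_diff p q z h1 h2 1
        rw [Fin.sum_univ_two (f := fun j => |ang q j z - ang p j z|)]
        simp only [Pi.add_apply]
        linarith
    _ = _ := by
        rw [integral_add i1 i2, integral_const_mul, integral_add iq ip]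
    _ ≤ _ := by
        have := hC q hqΩ
        have := hC p hp
        gcongr

lemma line_null (a b : R2) : volume ((line[ℝ, a, b] : AffineSubspace ℝ R2) : Set R2) = 0 := by
  apply MeasureTheory.Measure.addHaar_affineSubspace
  intro h
  have h1 : Module.finrank ℝ (vectorSpan ℝ ({a, b} : Set R2)) ≤ 1 :=
    collinear_iff_finrank_le_one.1 (collinear_pair ℝ a b)
  rw [← direction_affineSpan, h, AffineSubspace.direction_top, finrank_top] at h1
  simp at h1

lemma exists_gen {n : ℕ} (T : Finset (Fin n)) (q : Fin n → R2) (p : R2) (P : R2 → Prop)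
    (hP : ∀ᶠ z in 𝓝 p, P z) :
    ∃ z, P z ∧ ∀ i ∈ T, ∀ j ∈ T, z ∉ line[ℝ, q i, q j] := by
  have hae : ∀ᵐ z : R2, ∀ i j, z ∉ line[ℝ, q i, q j] := by
    rw [ae_all_iff]; intro i
    rw [ae_all_iff]; intro j
    rw [ae_iff]
    simpa using line_null (q i) (q j)
  obtain ⟨U, hU, ho, hpU⟩ := _root_.eventually_nhds_iff.1 hP
  by_contra! hc
  have h0 : volume U = 0 := by
    refine measure_mono_null (t := {z | ¬ ∀ i j, z ∉ line[ℝ, q i, q j]}) ?_ hae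
    intro z hz hz'
    obtain ⟨i, _, j, _, h⟩ := hc z (hU z hz)
    exact hz' i j h
  exact (ho.measure_pos volume ⟨p, hpU⟩).ne' h0

lemma main_ind (Ω : Set R2) (ho : IsOpen Ω) (hb : Bornology.IsBounded Ω) (u : R2 → R2)
    (G : R2 → Matrix (Fin 2) (Fin 2) ℝ) (hu : MemW11 Ω u G) (hS : SphereValued Ω u)
    {n : ℕ} (p : Fin n → R2) (hp : ∀ k, p k ∈ Ω) (s : Fin n → ℝ) (hs : ∀ k, s k ^ 2 = 1)
    (η : ℝ) (hη : 0 < η) (T : Finset (Fin n)) :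
    ∃ (u' : R2 → R2) (G' : R2 → Matrix (Fin 2) (Fin 2) ℝ) (q : Fin n → R2),
      MemW11 Ω u' G' ∧ SphereValued Ω u' ∧ (∀ k ∈ T, q k ∈ Ω ∧ dist (q k) (p k) < η) ∧
      (∀ i ∈ T, ∀ j ∈ T, i ≠ j → q i ≠ q j) ∧
      (∀ i ∈ T, ∀ j ∈ T, ∀ k ∈ T, i ≠ j → i ≠ k → j ≠ k →
        ¬ Collinear ℝ ({q i, q j, q k} : Set R2)) ∧
      (∀ φ : R2 → ℝ, MemLip0 Ω φ → detPairing Ω u' G' φ =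
        detPairing Ω u G φ + ∑ k ∈ T, s k * (Real.pi * (φ (q k) - φ (p k)))) ∧
      ∫ z in Ω, DD u G u' G' z ≤ T.card * η := by
  induction T using Finset.induction_on with
  | empty =>
    refine ⟨u, G, p, hu, hS, by simp, by simp, by simp, by simp, ?_⟩
    simp [DD]
  | insert a T ha ih =>
    obtain ⟨u', G', q, hu', hS', hq, hd, hc, hdet, hI⟩ := ih
    have hs' : (-(s a)) ^ 2 = 1 := by rw [neg_sq]; exact hs a
    have ev := ((close Ω ho hb u' G' hu' hS' (p a) (hp a) (s a) (hs a) η hη).and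
      (ho.mem_nhds (hp a))).and (ball_mem_nhds (p a) hη)
    obtain ⟨z, ⟨⟨hz1, hz2⟩, hz3⟩, hz4⟩ := exists_gen T q (p a) _ ev
    obtain ⟨hA, hA'⟩ := step_W11 Ω hb u' G' hu' hS' z (s a) (hs a)
    obtain ⟨hB, hB'⟩ := step_W11 Ω hb _ _ hA hA' (p a) (-(s a)) hs'
    have hne : ∀ i ∈ T, z ≠ q i := by
      rintro i hi rfl
      exact hz4 i hi i hi (left_mem_affineSpan_pair ℝ _ _)
    have hcol : ∀ i ∈ T, ∀ j ∈ T, i ≠ j → ∀ S : Set R2, z ∈ S → q i ∈ S → q j ∈ S →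
        ¬ Collinear ℝ S := by
      intro i hi j hj hij S h1 h2 h3 hC
      exact hz4 i hi j hj (hC.mem_affineSpan_of_mem_of_ne h2 h3 h1 (hd i hi j hj hij))
    have hqa : Function.update q a z a = z := by simp
    have hqT : ∀ k ∈ T, Function.update q a z k = q k := fun k hk => by
      rw [Function.update_of_ne]; rintro rfl; exact ha hk
    refine ⟨_, _, Function.update q a z, hB, hB', ?_, ?_, ?_, ?_, ?_⟩
    · intro k hk
      rcases Finset.mem_insert.1 hk with rfl | hk
      · rw [hqa]; exact ⟨hz2, hz3⟩
      · rw [hqT k hk]; exact hq k hk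
    · intro i hi j hj hij
      rcases Finset.mem_insert.1 hi with rfl | hi' <;> rcases Finset.mem_insert.1 hj with rfl | hj'
      · exact absurd rfl hij
      · rw [hqa, hqT j hj']; exact hne j hj'
      · rw [hqa, hqT i hi']; exact (hne i hi').symm
      · rw [hqT i hi', hqT j hj']; exact hd i hi' j hj' hij
    · intro i hi j hj k hk hij hik hjk
      rcases Finset.mem_insert.1 hi with rfl | hi'
      · have hj' := (Finset.mem_insert.1 hj).resolve_left hij.symm
        have hk' := (Finset.mem_insert.1 hk).resolve_left hik.symm
        rw [hqa, hqT j hj', hqT k hk']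
        exact hcol j hj' k hk' hjk _ (by simp) (by simp) (by simp)
      rcases Finset.mem_insert.1 hj with rfl | hj'
      · have hk' := (Finset.mem_insert.1 hk).resolve_left hjk.symm
        rw [hqa, hqT i hi', hqT k hk']
        exact hcol i hi' k hk' hik _ (by simp) (by simp) (by simp)
      rcases Finset.mem_insert.1 hk with rfl | hk'
      · rw [hqa, hqT i hi', hqT j hj']
        exact hcol i hi' j hj' hij _ (by simp) (by simp) (by simp)
      rw [hqT i hi', hqT j hj', hqT k hk']
      exact hc i hi' j hj' k hk' hij hik hjk
    · intro φ hφ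
      rw [step_det Ω ho hb _ _ hA hA' (p a) (hp a) _ hs' φ hφ,
        step_det Ω ho hb _ _ hu' hS' z hz2 _ (hs a) φ hφ, hdet φ hφ, Finset.sum_insert ha, hqa]
      rw [Finset.sum_congr rfl (fun k hk => by rw [hqT k hk] :
        ∀ k ∈ T, s k * (Real.pi * (φ (Function.update q a z k) - φ (p k))) =
          s k * (Real.pi * (φ (q k) - φ (p k))))]
      ring
    · rw [Finset.card_insert_of_notMem ha]
      push_cast
      have i1 := DD_integrable Ω u G hu u' G' hu'
      have i2 := DD_integrable Ω u' G' hu' _ _ hB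
      have i3 := DD_integrable Ω u G hu _ _ hB
      have := integral_mono i3 (i1.add i2) (fun w => DD_triangle u G u' G' _ _ w)
      have e : ∫ w in Ω, (DD u G u' G' + DD u' G' (mulU (-(s a)) (p a) (mulU (s a) z u'))
          (mulG (-(s a)) (p a) (mulU (s a) z u') (mulG (s a) z u' G'))) w = _ := integral_add i1 i2
      linarith

lemma frob_le (M : Matrix (Fin 2) (Fin 2) ℝ) : frob M ≤ ∑ i, ∑ j, |M i j| := by
  unfold frob
  simp only [Fin.sum_univ_two]
  apply Real.sqrt_le_iff.2
  refine ⟨by positivity, ?_⟩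
  rw [← sq_abs (M 0 0), ← sq_abs (M 0 1), ← sq_abs (M 1 0), ← sq_abs (M 1 1)]
  have := abs_nonneg (M 0 0)
  have := abs_nonneg (M 0 1)
  have := abs_nonneg (M 1 0)
  have := abs_nonneg (M 1 1)
  nlinarith [mul_nonneg (abs_nonneg (M 0 0)) (abs_nonneg (M 0 1)),
    mul_nonneg (abs_nonneg (M 0 0)) (abs_nonneg (M 1 0)),
    mul_nonneg (abs_nonneg (M 0 0)) (abs_nonneg (M 1 1)),
    mul_nonneg (abs_nonneg (M 0 1)) (abs_nonneg (M 1 0)),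
    mul_nonneg (abs_nonneg (M 0 1)) (abs_nonneg (M 1 1)),
    mul_nonneg (abs_nonneg (M 1 0)) (abs_nonneg (M 1 1))]

lemma norm_le_sum (v : R2) : ‖v‖ ≤ ∑ i, |v i| := by
  rw [EuclideanSpace.norm_eq]
  simp only [Fin.sum_univ_two, Real.norm_eq_abs]
  apply Real.sqrt_le_iff.2
  refine ⟨by positivity, ?_⟩
  nlinarith [mul_nonneg (abs_nonneg (v 0)) (abs_nonneg (v 1))]

lemma norm_int_le (Ω : Set R2) (u : R2 → R2)
    (G : R2 → Matrix (Fin 2) (Fin 2) ℝ) (hu : MemW11 Ω u G)  (u' : R2 → R2)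
    (G' : R2 → Matrix (Fin 2) (Fin 2) ℝ) (hu' : MemW11 Ω u' G') :
    ∫ z in Ω, (‖u z - u' z‖ + frob (G z - G' z)) ≤ ∫ z in Ω, DD u G u' G' z := by
  apply integral_mono_of_nonneg
  · exact ae_of_all _ fun z => add_nonneg (norm_nonneg _) (Real.sqrt_nonneg _)
  · exact DD_integrable Ω u G hu u' G' hu'
  · refine ae_of_all _ fun z => ?_
    have h1 := norm_le_sum (u z - u' z)
    have h2 := frob_le (G z - G' z)
    simp only [PiLp.sub_apply, Matrix.sub_apply] at h1 h2
    exact add_le_add h1 h2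

/-- **Lemma 5.3 (density: not collinear points).** If `Det(∇u)` is a finite sum of
dipoles satisfying `(P_f)`, then `u` can be approximated by `u_ε ∈ W^{1,1}(Ω;S¹)` whose
Jacobian is a finite sum of dipoles with distinct, three-by-three non-collinear
interior points. -/
theorem density_noncollinear_points (Ω : Set R2) (hΩo : IsOpen Ω)
    (hΩb : Bornology.IsBounded Ω) (hΩc : IsConnected Ω) (hΩl : HasLipschitzBoundary Ω)
    (u : R2 → R2) (G : R2 → Matrix (Fin 2) (Fin 2) ℝ)
    (hu : MemW11 Ω u G) (hS : SphereValued Ω u)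
    (n : ℕ) (x y : Fin n → R2) (hPf : SatisfiesPf Ω x y)
    (hrep : ∀ φ : R2 → ℝ, MemLip0 Ω φ →
      detPairing Ω u G φ = Real.pi * ∑ i, (φ (x i) - φ (y i))) :
    ∀ ε : ℝ, 0 < ε →
      ∃ (uε : R2 → R2) (Gε : R2 → Matrix (Fin 2) (Fin 2) ℝ) (xε yε : Fin n → R2),
        MemW11 Ω uε Gε ∧ SphereValued Ω uε ∧
        (∀ i, xε i ∈ closure Ω ∧ yε i ∈ closure Ω) ∧
        (∀ φ : R2 → ℝ, MemLip0 Ω φ →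
          detPairing Ω uε Gε φ = Real.pi * ∑ i, (φ (xε i) - φ (yε i))) ∧
        InteriorPointsGeneric Ω xε yε ∧
        ENNReal.ofReal (∫ z in Ω, (‖u z - uε z‖ + frob (G z - Gε z))) +
            flatNorm Ω 1 (fun φ => detPairing Ω u G φ - detPairing Ω uε Gε φ) <
          ENNReal.ofReal ε := by
  intro ε hε
  obtain ⟨hP, -⟩ := hPf
  have hfr : ∀ z ∈ frontier Ω, z ∉ Ω := by
    intro z hz hz'
    rw [hΩo.frontier_eq] at hz
    exact hz.2 hz'
  have hfc : ∀ z ∈ frontier Ω, z ∈ closure Ω := fun z hz => frontier_subset_closure hz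
  have hcase : ∀ k, (x k ∈ Ω ∧ y k ∈ frontier Ω ∧ y k ∉ Ω) ∨
      (x k ∉ Ω ∧ y k ∈ Ω ∧ x k ∈ frontier Ω) := by
    intro k
    rcases hP k with h | h
    · exact Or.inl ⟨h.1, h.2.1, hfr _ h.2.1⟩
    · exact Or.inr ⟨hfr _ h.2.1, h.1, h.2.1⟩
  set p : Fin n → R2 := fun k => if x k ∈ Ω then x k else y k with hpdef
  set s : Fin n → ℝ := fun k => if x k ∈ Ω then 1 else -1 with hsdef
  have hp : ∀ k, p k ∈ Ω := by
    intro k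
    rcases hcase k with h | h <;> simp [hpdef, h]
  have hs : ∀ k, s k ^ 2 = 1 := by
    intro k
    rcases hcase k with h | h <;> simp [hsdef, h]
  have hs1 : ∀ k, |s k| = 1 := by
    intro k
    rcases hcase k with h | h <;> simp [hsdef, h]
  obtain ⟨η, hη, hηε⟩ : ∃ η : ℝ, 0 < η ∧ 5 * (n * η) < ε := by
    refine ⟨ε / (5 * (n + 1)), by positivity, ?_⟩
    have hn : (0 : ℝ) ≤ n := Nat.cast_nonneg n
    rw [show 5 * (n * (ε / (5 * ((n : ℝ) + 1)))) = ε * (n / (n + 1)) by field_simp]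
    have : (n : ℝ) / (n + 1) < 1 := by rw [div_lt_one (by positivity)]; linarith
    nlinarith
  obtain ⟨u', G', q, hu', hS', hq, hd, hc, hdet, hI⟩ :=
    main_ind Ω hΩo hΩb u G hu hS p hp s hs η hη Finset.univ
  simp only [Finset.mem_univ, forall_true_left, Finset.card_univ, Fintype.card_fin] at hq hd hc hI
  refine ⟨u', G', fun k => if x k ∈ Ω then q k else x k,
    fun k => if x k ∈ Ω then y k else q k, hu', hS', ?_, ?_, ?_, ?_⟩
  · intro k
    have := subset_closure (hq k).1
    rcases hcase k with h | h
    · simp [h, this, hfc _ h.2.1]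
    · simp [h, this, hfc _ h.2.2]
  · intro φ hφ
    rw [hdet φ hφ, hrep φ hφ, Finset.mul_sum, Finset.mul_sum, ← Finset.sum_add_distrib]
    refine Finset.sum_congr rfl fun k _ => ?_
    rcases hcase k with h | h
    · simp only [hpdef, hsdef, h.1, if_true]; ring
    · simp only [hpdef, hsdef, h.1, if_false]; ring
  · set xε : Fin n → R2 := fun k => if x k ∈ Ω then q k else x k with hx
    set yε : Fin n → R2 := fun k => if x k ∈ Ω then y k else q k with hy
    have key : ∀ a : Fin n ⊕ Fin n, Sum.elim xε yε a ∈ Ω →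
        Sum.elim xε yε a = q (Sum.elim id id a) ∧
          (a = if x (Sum.elim id id a) ∈ Ω then Sum.inl (Sum.elim id id a)
            else Sum.inr (Sum.elim id id a)) := by
      rintro (k | k) ha
      · rcases hcase k with h | h
        · simp [hx, h]
        · simp [hx, h] at ha
      · rcases hcase k with h | h
        · simp [hy, h] at ha
        · simp [hy, h]
    have inj : ∀ a b : Fin n ⊕ Fin n, Sum.elim xε yε a ∈ Ω → Sum.elim xε yε b ∈ Ω → a ≠ b →
        (Sum.elim id id a : Fin n) ≠ Sum.elim id id b := by
      intro a b ha hb hab he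
      apply hab
      rw [(key a ha).2, (key b hb).2, he]
    refine ⟨?_, ?_⟩
    · intro a b ha hb hab
      rw [(key a ha).1, (key b hb).1]
      exact hd _ _ (inj a b ha hb hab)
    · intro a b c ha hb hc' hab hac hbc
      rw [(key a ha).1, (key b hb).1, (key c hc').1]
      exact hc _ _ _ (inj a b ha hb hab) (inj a c ha hc' hac) (inj b c hb hc' hbc)
  · have hn : (0 : ℝ) ≤ n * η := by positivity
    have h1 : ∫ z in Ω, (‖u z - u' z‖ + frob (G z - G' z)) ≤ n * η :=
      (norm_int_le Ω u G hu u' G' hu').trans hI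
    have h2 : flatNorm Ω 1 (fun φ => detPairing Ω u G φ - detPairing Ω u' G' φ) ≤
        ENNReal.ofReal (4 * (n * η)) := by
      unfold flatNorm flatNormOn
      refine iSup₂_le fun φ hφ => ENNReal.ofReal_le_ofReal ?_
      obtain ⟨hL, h0, -⟩ := hφ
      show detPairing Ω u G φ - detPairing Ω u' G' φ ≤ _
      rw [hdet φ ⟨⟨1, hL⟩, h0⟩]
      have hk : ∀ k ∈ (Finset.univ : Finset (Fin n)),
          -(4 * η) ≤ s k * (Real.pi * (φ (q k) - φ (p k))) := by
        intro k _
        have e1 : |φ (q k) - φ (p k)| ≤ η := by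
          have := hL.dist_le_mul _ (subset_closure (hq k).1) _ (subset_closure (hp k))
          rw [Real.dist_eq, NNReal.coe_one, one_mul] at this
          exact this.trans (hq k).2.le
        have e2 : |s k * (Real.pi * (φ (q k) - φ (p k)))| ≤ 4 * η := by
          rw [abs_mul, abs_mul, hs1, one_mul, abs_of_pos Real.pi_pos]
          exact mul_le_mul Real.pi_le_four e1 (abs_nonneg _) (by norm_num)
        exact (abs_le.1 e2).1
      have := Finset.sum_le_sum hk
      simp only [Finset.sum_const, Finset.card_univ, Fintype.card_fin, nsmul_eq_mul] at this
      linarith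
    calc _ ≤ ENNReal.ofReal (n * η) + ENNReal.ofReal (4 * (n * η)) :=
          add_le_add (ENNReal.ofReal_le_ofReal h1) h2
      _ = ENNReal.ofReal (5 * (n * η)) := by
          rw [← ENNReal.ofReal_add hn (by positivity)]; congr 1; ring
      _ < ENNReal.ofReal ε := (ENNReal.ofReal_lt_ofReal_iff hε).2 hηε
end
end

section
/- Let Ω ⊂ ℝ² be a bounded, open, connected set with Lipschitz boundary, and let Λ be the functional on Lip₀(Ω) given by Λ(φ) := Σ_{i=1}^∞ (φ(x_i) − φ(y_i)), where x_i, y_i ∈ cl(Ω), x_i ≠ y_i, for each i at least one of x_i, y_i lies in Ω, and Σ_{i=1}^∞ |x_i − y_i| = Σ_{i=1}^∞ d̄_Ω(x_i,y_i) < +∞. Then ‖Λ‖_{flat,α} equals the infimum of |R|(Ω) + 2 Σ_k H¹([a_k,b_k] ∩ Ω) over all m ∈ ℕ, signs σ_1,…,σ_m ∈ {−1,+1}, points z_1,…,z_m ∈ ℝ², and countable families of pairs (a_k,b_k) of points of ℝ² with Σ_k |b_k − a_k| < +∞, such that Σ_{i=1}^∞ (φ(x_i) − φ(y_i)) = Σ_{i=1}^m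 σ_i φ(z_i) + Σ_k (φ(b_k) − φ(a_k)) for every φ ∈ C_c^∞(ℝ²); here R := Σ_{i=1}^m σ_i δ_{z_i} is regarded as an atomic signed measure and |R|(Ω) is its total variation on Ω. -/
open MeasureTheory Metric Filter Set
open scoped ENNReal NNReal Topology Classical

noncomputable section

/-! ### Auxiliary lemmas -/

lemma flat_improve {X ι : Type*} [Fintype ι] [Nonempty ι] (D : X → X → ℝ)
    (hself : ∀ p, D p p = 0) (htri : ∀ p q r, D p r ≤ D p q + D q r)
    (x y : ι → X) (p0 : X) (u v : ι → ℝ)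
    (h : ∀ i j, u i - v j ≤ D (x i) (y j)) :
    ∃ φ : X → ℝ, (∀ p q, φ p - φ q ≤ D p q) ∧ φ p0 = 0 ∧
      ∑ i, u i - ∑ i, v i ≤ ∑ i, φ (x i) - ∑ i, φ (y i) := by
  set ψ : X → ℝ := fun p => ⨅ j, (v j + D p (y j)) with hψ
  have hb : ∀ p, BddBelow (Set.range fun j => v j + D p (y j)) :=
    fun p => (Set.finite_range _).bddBelow
  have h1 : ∀ p q, ψ p - ψ q ≤ D p q := by
    intro p q
    have : ψ p - D p q ≤ ψ q := by
      apply le_ciInf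
      intro j
      have := ciInf_le (hb p) j
      have h2 := htri p q (y j)
      simp only [hψ]
      linarith
    linarith
  have h2 : ∀ i, u i ≤ ψ (x i) := by
    intro i
    apply le_ciInf
    intro j
    linarith [h i j]
  have h3 : ∀ j, ψ (y j) ≤ v j := by
    intro j
    have := ciInf_le (hb (y j)) j
    simp only [hself, add_zero] at this
    exact this
  refine ⟨fun p => ψ p - ψ p0, fun p q => by linarith [h1 p q], by simp, ?_⟩
  have e1 := Finset.sum_le_sum (fun i (_ : i ∈ Finset.univ) => h2 i)
  have e2 := Finset.sum_le_sum (fun i (_ : i ∈ Finset.univ) => h3 i)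
  simp only [Finset.sum_sub_distrib]
  linarith

lemma flat_dual {X ι : Type*} [Fintype ι] [Nonempty ι] (D : X → X → ℝ)
    (hself : ∀ p, D p p = 0) (hsymm : ∀ p q, D p q = D q p)
    (htri : ∀ p q r, D p r ≤ D p q + D q r)
    (x y : ι → X) (p0 : X) (hp0 : ∀ p, D p p0 ≤ 1) :
    ∃ (φ : X → ℝ) (τ : ι → ι), Function.Bijective τ ∧ (∀ p q, φ p - φ q ≤ D p q) ∧ φ p0 = 0 ∧
      ∑ i, D (x i) (y (τ i)) ≤ ∑ i, φ (x i) - ∑ i, φ (y i) := by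
  have hnn : ∀ p q, 0 ≤ D p q := by
    intro p q
    have := htri p q p
    rw [hself, hsymm q p] at this
    linarith
  let K : Set ((ι → ℝ) × (ι → ℝ)) :=
    (Set.Icc (fun _ => -1) (fun _ => 1) ×ˢ Set.Icc (fun _ => -1) (fun _ => 1)) ∩
      {w | ∀ i j, w.1 i - w.2 j ≤ D (x i) (y j)}
  have hK : IsCompact K := by
    apply (isCompact_Icc.prod isCompact_Icc).inter_right
    simp only [Set.ofPred_forall]
    refine isClosed_iInter fun i => isClosed_iInter fun j => isClosed_le (by fun_prop) (by fun_prop)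
  have hKn : K.Nonempty := by
    refine ⟨(0, 0), ⟨⟨?_, ?_⟩, ⟨?_, ?_⟩⟩, ?_⟩
    · intro i; simp
    · intro i; simp
    · intro i; simp
    · intro i; simp
    · intro i j
      simpa using hnn _ _
  have hcont : ContinuousOn (fun w : (ι → ℝ) × (ι → ℝ) => ∑ i, w.1 i - ∑ i, w.2 i) K := by
    fun_prop
  obtain ⟨⟨u, v⟩, huv, hmax⟩ := hK.exists_isMaxOn hKn hcont
  have hfeas : ∀ i j, u i - v j ≤ D (x i) (y j) := huv.2
  have hopt : ∀ u' v' : ι → ℝ, (∀ i j, u' i - v' j ≤ D (x i) (y j)) →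
      ∑ i, u' i - ∑ i, v' i ≤ ∑ i, u i - ∑ i, v i := by
    intro u' v' h'
    obtain ⟨φ, h1, h2, h3⟩ := flat_improve D hself htri x y p0 u' v' h'
    have hφ : ∀ p, -1 ≤ φ p ∧ φ p ≤ 1 := by
      intro p
      have e1 := h1 p p0
      have e2 := h1 p0 p
      rw [hsymm] at e2
      have := hp0 p
      constructor <;> linarith
    have : ((fun i => φ (x i), fun i => φ (y i)) : (ι → ℝ) × (ι → ℝ)) ∈ K := by
      refine ⟨⟨⟨fun i => (hφ _).1, fun i => (hφ _).2⟩, ⟨fun i => (hφ _).1, fun i => (hφ _).2⟩⟩, ?_⟩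
      intro i j
      exact h1 _ _
    have := hmax this
    simp only [Set.mem_ofPred_eq] at this
    linarith
  let t : ι → Finset ι := fun i => Finset.univ.filter fun j => u i - v j = D (x i) (y j)
  have hHall : ∀ s : Finset ι, s.card ≤ (s.biUnion t).card := by
    intro s
    by_contra hlt
    push Not at hlt
    have hev : ∀ᶠ ε in 𝓝[>] (0 : ℝ), ∀ i j, u i - v j ≠ D (x i) (y j) →
        u i + ε - v j ≤ D (x i) (y j) := by
      rw [Filter.eventually_all]
      intro i
      rw [Filter.eventually_all]
      intro j
      by_cases hij : u i - v j = D (x i) (y j)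
      · exact Filter.Eventually.of_forall fun ε h => absurd hij h
      · have hlt' : u i - v j < D (x i) (y j) := lt_of_le_of_ne (hfeas i j) hij
        have : Set.Ioo (0 : ℝ) (D (x i) (y j) - (u i - v j)) ∈ 𝓝[>] (0 : ℝ) :=
          Ioo_mem_nhdsGT (by linarith)
        filter_upwards [this] with ε hε _
        have := hε.2
        linarith
    obtain ⟨ε, hε, hε0⟩ := (hev.and self_mem_nhdsWithin).exists
    have hε0' : (0 : ℝ) < ε := hε0
    have := hopt (fun i => u i + if i ∈ s then ε else 0)
      (fun j => v j + if j ∈ s.biUnion t then ε else 0) ?_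
    · simp only [Finset.sum_add_distrib, Finset.sum_ite_mem, Finset.univ_inter,
        Finset.sum_const, nsmul_eq_mul] at this
      have hc : ((s.biUnion t).card : ℝ) < s.card := by exact_mod_cast hlt
      nlinarith
    · intro i j
      by_cases hi : i ∈ s
      · by_cases hj : j ∈ s.biUnion t
        · simp only [hi, hj, if_true]
          linarith [hfeas i j]
        · simp only [hi, hj, if_true, if_false]
          have : u i - v j ≠ D (x i) (y j) := by
            intro he
            apply hj
            rw [Finset.mem_biUnion]
            exact ⟨i, hi, by simp [t, he]⟩
          linarith [hε i j this]
      · simp only [hi, if_false]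
        split_ifs <;> linarith [hfeas i j]
  obtain ⟨τ, hτi, hτ⟩ := (Finset.all_card_le_biUnion_card_iff_exists_injective t).1 hHall
  have hτb : Function.Bijective τ := Finite.injective_iff_bijective.1 hτi
  obtain ⟨φ, h1, h2, h3⟩ := flat_improve D hself htri x y p0 u v hfeas
  refine ⟨φ, τ, hτb, h1, h2, le_trans (le_of_eq ?_) h3⟩
  have : ∀ i, D (x i) (y (τ i)) = u i - v (τ i) := by
    intro i
    have := hτ i
    simp only [t, Finset.mem_filter] at this
    exact this.2.symm
  simp only [this, Finset.sum_sub_distrib]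
  congr 1
  exact hτb.sum_comp v

/-- Cost of sending a point to the boundary, or leaving it as a Dirac mass. -/
def ptCost (Ω : Set R2) (p : R2) : ℝ := min 1 (2 * Metric.infDist p (frontier Ω))

/-- Transport cost between two points. -/
def pairCost (Ω : Set R2) (p q : R2) : ℝ := min (2 * dist p q) (ptCost Ω p + ptCost Ω q)

lemma ptCost_nonneg (Ω : Set R2) (p : R2) : 0 ≤ ptCost Ω p :=
  le_min zero_le_one (mul_nonneg zero_le_two Metric.infDist_nonneg)

lemma ptCost_le (Ω : Set R2) (p q : R2) : ptCost Ω p ≤ ptCost Ω q + 2 * dist p q := by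
  have h := Metric.infDist_le_infDist_add_dist (s := frontier Ω) (x := p) (y := q)
  have hd : 0 ≤ dist p q := dist_nonneg
  unfold ptCost
  rcases min_cases 1 (2 * Metric.infDist q (frontier Ω)) with ⟨e, _⟩ | ⟨e, _⟩
  · rw [e]
    linarith [min_le_left 1 (2 * Metric.infDist p (frontier Ω))]
  · rw [e]
    linarith [min_le_right 1 (2 * Metric.infDist p (frontier Ω))]

lemma pairCost_self (Ω : Set R2) (p : R2) : pairCost Ω p p = 0 := by
  have := ptCost_nonneg Ω p
  unfold pairCost
  rw [dist_self, mul_zero, min_eq_left]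
  linarith

lemma pairCost_symm (Ω : Set R2) (p q : R2) : pairCost Ω p q = pairCost Ω q p := by
  unfold pairCost
  rw [dist_comm, add_comm]

lemma pairCost_tri (Ω : Set R2) (p q r : R2) :
    pairCost Ω p r ≤ pairCost Ω p q + pairCost Ω q r := by
  have h1 : pairCost Ω p r ≤ 2 * dist p r := min_le_left _ _
  have h2 : pairCost Ω p r ≤ ptCost Ω p + ptCost Ω r := min_le_right _ _
  have h3 := dist_triangle p q r
  have h4 := ptCost_le Ω p q
  have h5 := ptCost_le Ω r q
  rw [dist_comm r q] at h5
  have h6 := ptCost_nonneg Ω q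
  rcases min_cases (2 * dist p q) (ptCost Ω p + ptCost Ω q) with ⟨e, _⟩ | ⟨e, _⟩ <;>
  rcases min_cases (2 * dist q r) (ptCost Ω q + ptCost Ω r) with ⟨e', _⟩ | ⟨e', _⟩ <;>
  · rw [show pairCost Ω p q = _ from e, show pairCost Ω q r = _ from e']
    linarith

lemma ptCost_frontier (Ω : Set R2) {p : R2} (hp : p ∈ frontier Ω) : ptCost Ω p = 0 := by
  unfold ptCost
  rw [Metric.infDist_zero_of_mem hp]
  simp

lemma hausdorff_seg_le (Ω : Set R2) (a b : R2) :
    μH[1] (segment ℝ a b ∩ Ω) ≤ ENNReal.ofReal (dist a b) := by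
  refine (measure_mono Set.inter_subset_left).trans ?_
  rw [hausdorffMeasure_segment, edist_dist]

/-- Decomposition of a single point. -/
lemma point_decomp (Ω : Set R2) (hne : (frontier Ω).Nonempty) (hΩo : IsOpen Ω) (p : R2) :
    ∃ w a : R2, (∃ b : R2, (∀ φ : R2 → ℝ, φ p = φ w + (φ b - φ a))
      ∧ Ω.indicator (fun _ => (1 : ℝ≥0∞)) w + 2 * μH[1] (segment ℝ a b ∩ Ω)
        ≤ ENNReal.ofReal (ptCost Ω p)) := by
  rcases min_cases 1 (2 * Metric.infDist p (frontier Ω)) with ⟨e, _⟩ | ⟨e, _⟩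
  · refine ⟨p, p, p, by simp, ?_⟩
    have : μH[1] (segment ℝ p p ∩ Ω) = 0 := by
      have := hausdorff_seg_le Ω p p
      simpa using this
    rw [this, show ptCost Ω p = 1 from e]
    simp only [mul_zero, add_zero, ENNReal.ofReal_one]
    exact Set.indicator_le_self' (fun _ _ => zero_le) p
  · obtain ⟨q, hq, hd⟩ := isClosed_frontier.exists_infDist_eq_dist hne p
    refine ⟨q, q, p, by simp, ?_⟩
    have hqn : q ∉ Ω := by
      rw [hΩo.frontier_eq] at hq
      exact hq.2
    rw [Set.indicator_of_notMem hqn, zero_add, show ptCost Ω p = _ from e, hd,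
      ENNReal.ofReal_mul zero_le_two, ENNReal.ofReal_ofNat, dist_comm]
    gcongr
    exact hausdorff_seg_le Ω q p

/-- Decomposition of a pair of points. -/
lemma pair_decomp (Ω : Set R2) (hne : (frontier Ω).Nonempty) (hΩo : IsOpen Ω) (p q : R2) :
    ∃ w a b : Bool → R2,
      (∀ φ : R2 → ℝ, φ p - φ q = (φ (w true) - φ (w false)) +
        ((φ (b true) - φ (a true)) + (φ (b false) - φ (a false)))) ∧
      (∑ s, Ω.indicator (fun _ => (1 : ℝ≥0∞)) (w s)) +
        2 * ∑ s, μH[1] (segment ℝ (a s) (b s) ∩ Ω) ≤ ENNReal.ofReal (pairCost Ω p q) := by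
  rcases min_cases (2 * dist p q) (ptCost Ω p + ptCost Ω q) with ⟨e, _⟩ | ⟨e, _⟩
  · obtain ⟨p0, hp0⟩ := hne
    have hqn : p0 ∉ Ω := by
      rw [hΩo.frontier_eq] at hp0
      exact hp0.2
    refine ⟨fun _ => p0, fun s => bif s then q else p0, fun s => bif s then p else p0,
      fun φ => by simp, ?_⟩
    have h0 : μH[1] (segment ℝ p0 p0 ∩ Ω) = 0 := by
      have := hausdorff_seg_le Ω p0 p0
      simpa using this
    rw [show pairCost Ω p q = _ from e]
    simp only [Set.indicator_of_notMem hqn, Finset.sum_const_zero, zero_add, Fintype.sum_bool,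
      cond_true, cond_false, h0, add_zero]
    rw [ENNReal.ofReal_mul zero_le_two, ENNReal.ofReal_ofNat, dist_comm]
    gcongr
    exact hausdorff_seg_le Ω q p
  · obtain ⟨w1, a1, b1, h1, c1⟩ := point_decomp Ω hne hΩo p
    obtain ⟨w2, a2, b2, h2, c2⟩ := point_decomp Ω hne hΩo q
    refine ⟨fun s => bif s then w1 else w2, fun s => bif s then a1 else b2,
      fun s => bif s then b1 else a2, fun φ => ?_, ?_⟩
    · simp only [cond_true, cond_false]
      rw [h1 φ, h2 φ]
      ring
    · rw [show pairCost Ω p q = _ from e, ENNReal.ofReal_add (ptCost_nonneg _ _) (ptCost_nonneg _ _)]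
      refine le_trans (le_of_eq ?_) (add_le_add c1 c2)
      simp only [Fintype.sum_bool, cond_true, cond_false]
      rw [segment_symm ℝ b2 a2]
      ring

lemma ext_lipschitz (Ω : Set R2) (φ : R2 → ℝ)
    (h : FlatAdmissible Ω (frontier Ω) 2 φ) : LipschitzWith 2 (Ω.indicator φ) := by
  obtain ⟨hL, hZ, -⟩ := h
  have key : ∀ p q, p ∈ Ω → q ∉ Ω → |φ p| ≤ 2 * dist p q := by
    intro p q hp hq
    have hne : Ω ≠ Set.univ := fun h => hq (h ▸ Set.mem_univ q)
    obtain ⟨r, hr, hd⟩ := exists_mem_frontier_infDist_compl_eq_dist hp hne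
    have h1 := hL.dist_le_mul p (subset_closure hp) r (frontier_subset_closure hr)
    rw [hZ r hr, Real.dist_eq, sub_zero, ← hd] at h1
    have h2 : Metric.infDist p Ωᶜ ≤ dist p q := Metric.infDist_le_dist_of_mem hq
    simp only [NNReal.coe_ofNat] at h1
    linarith
  apply LipschitzWith.of_dist_le_mul
  intro p q
  simp only [NNReal.coe_ofNat]
  by_cases hp : p ∈ Ω <;> by_cases hq : q ∈ Ω
  · rw [Set.indicator_of_mem hp, Set.indicator_of_mem hq]
    exact hL.dist_le_mul p (subset_closure hp) q (subset_closure hq)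
  · rw [Set.indicator_of_mem hp, Set.indicator_of_notMem hq, Real.dist_eq, sub_zero]
    exact key p q hp hq
  · rw [Set.indicator_of_notMem hp, Set.indicator_of_mem hq, dist_comm, dist_comm p q,
      Real.dist_eq, sub_zero]
    exact key q p hq hp
  · rw [Set.indicator_of_notMem hp, Set.indicator_of_notMem hq, dist_self]
    positivity

lemma seg_bound (Ω : Set R2) (hΩo : IsOpen Ω) (f : R2 → ℝ) (hf : LipschitzWith 2 f)
    (h0 : ∀ p, p ∉ Ω → f p = 0) (a b : R2) :
    ENNReal.ofReal (f b - f a) ≤ 2 * μH[1] (segment ℝ a b ∩ Ω) := by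
  have hlip : ∀ p q, f p - f q ≤ 2 * dist p q := by
    intro p q
    have := hf.dist_le_mul p q
    rw [Real.dist_eq] at this
    exact (le_abs_self _).trans this
  by_cases hsub : segment ℝ a b ⊆ Ω
  · rw [Set.inter_eq_left.2 hsub, hausdorffMeasure_segment, edist_dist, dist_comm]
    refine (ENNReal.ofReal_le_ofReal (hlip b a)).trans ?_
    rw [ENNReal.ofReal_mul zero_le_two, ENNReal.ofReal_ofNat]
  · let g : ℝ → R2 := fun t => AffineMap.lineMap a b t
    have hg : Continuous g := AffineMap.lineMap_continuous
    have hseg : ∀ z, z ∈ segment ℝ a b ↔ ∃ t ∈ Set.Icc (0 : ℝ) 1, g t = z := by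
      intro z
      rw [segment_eq_image_lineMap]
      rfl
    let T : Set ℝ := Set.Icc 0 1 ∩ g ⁻¹' Ωᶜ
    have hT : IsCompact T := isCompact_Icc.inter_right (hΩo.isClosed_compl.preimage hg)
    have hTn : T.Nonempty := by
      obtain ⟨z, hz, hz'⟩ := Set.not_subset.1 hsub
      obtain ⟨t, ht, rfl⟩ := (hseg z).1 hz
      exact ⟨t, ht, hz'⟩
    obtain ⟨s, hs, hsmin⟩ := hT.exists_isLeast hTn
    obtain ⟨t, ht, htmax⟩ := hT.exists_isGreatest hTn
    have hst : s ≤ t := hsmin ht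
    have hcover : segment ℝ a b ⊆ (segment ℝ a b ∩ Ω) ∪ segment ℝ (g s) (g t) := by
      intro z hz
      obtain ⟨r, hr, rfl⟩ := (hseg z).1 hz
      by_cases hrΩ : g r ∈ Ω
      · exact Or.inl ⟨hz, hrΩ⟩
      · right
        have hrT : r ∈ T := ⟨hr, hrΩ⟩
        have h1 := hsmin hrT
        have h2 := htmax hrT
        have : r ∈ segment ℝ s t := by
          rw [segment_eq_Icc hst]
          exact ⟨h1, h2⟩
        have := mem_image_of_mem (AffineMap.lineMap a b : ℝ →ᵃ[ℝ] R2) this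
        rw [image_segment] at this
        exact this
    have hμ : edist a b ≤ μH[1] (segment ℝ a b ∩ Ω) + edist (g s) (g t) := by
      rw [← hausdorffMeasure_segment, ← hausdorffMeasure_segment]
      exact (measure_mono hcover).trans (measure_union_le _ _)
    have hds : dist (g s) a = s * dist a b := by
      simp only [g]
      rw [dist_lineMap_left, Real.norm_of_nonneg hs.1.1]
    have hdt : dist b (g t) = (1 - t) * dist a b := by
      simp only [g]
      rw [dist_comm, dist_lineMap_right, Real.norm_of_nonneg (by linarith [ht.1.2])]
    have hdst : dist (g s) (g t) = (t - s) * dist a b := by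
      simp only [g]
      rw [dist_lineMap_lineMap, dist_comm, Real.dist_eq, abs_of_nonneg (by linarith)]
    have hfin : f b - f a ≤ 2 * (dist a b - dist (g s) (g t)) := by
      have h1 := hlip b (g t)
      have h2 := hlip (g s) a
      rw [h0 _ ht.2] at h1
      rw [h0 _ hs.2] at h2
      rw [hds] at h2
      rw [hdt] at h1
      rw [hdst]
      linarith
    refine (ENNReal.ofReal_le_ofReal hfin).trans ?_
    rw [ENNReal.ofReal_mul zero_le_two, ENNReal.ofReal_ofNat, ENNReal.ofReal_sub _ dist_nonneg,
      ← edist_dist, ← edist_dist]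
    gcongr
    exact tsub_le_iff_right.2 hμ

lemma signed_sum_apply {m : ℕ} (μ : Fin m → SignedMeasure R2) (s : Set R2) :
    (∑ i, μ i) s = ∑ i, μ i s := by
  induction m with
  | zero => simp
  | succ k ih =>
    rw [Fin.sum_univ_succ, Fin.sum_univ_succ, ← ih]
    rfl

lemma tv_lower (Ω : Set R2) (f : R2 → ℝ)
    (h0 : ∀ p, p ∉ Ω → f p = 0) (h1 : ∀ p, |f p| ≤ 1) (m : ℕ) (σ : Fin m → ℤ) (z : Fin m → R2) :
    ENNReal.ofReal (∑ i, (σ i : ℝ) * f (z i)) ≤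
      (∑ i, (σ i) • ((MeasureTheory.Measure.dirac (z i)).toSignedMeasure :
                MeasureTheory.SignedMeasure R2)).totalVariation Ω := by
  set R := ∑ i, (σ i) • ((MeasureTheory.Measure.dirac (z i)).toSignedMeasure :
                MeasureTheory.SignedMeasure R2) with hR
  have happ : ∀ w : R2, R {w} = ∑ i, if z i = w then (σ i : ℝ) else 0 := by
    intro w
    rw [hR, signed_sum_apply]
    refine Finset.sum_congr rfl fun i _ => ?_
    have hz : ((σ i) • ((Measure.dirac (z i)).toSignedMeasure : SignedMeasure R2)) {w} =
        (σ i : ℝ) * (Measure.dirac (z i)).toSignedMeasure {w} := by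
      rw [← zsmul_eq_mul]
      rfl
    rw [hz, Measure.toSignedMeasure_apply_measurable (measurableSet_singleton w)]
    simp only [Measure.real, Measure.dirac_apply' _ (measurableSet_singleton w)]
    by_cases h : z i = w
    · simp [h]
    · simp [h]
  let W : Finset R2 := (Finset.univ.image z).filter (· ∈ Ω)
  have hsum : ∑ i, (σ i : ℝ) * f (z i) = ∑ w ∈ W, R {w} * f w := by
    rw [Finset.sum_filter_of_ne]
    · rw [← Finset.sum_fiberwise_of_maps_to (s := Finset.univ) (t := Finset.univ.image z) (g := z)
        (fun i _ => Finset.mem_image_of_mem _ (Finset.mem_univ i))]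
      refine Finset.sum_congr rfl fun w _ => ?_
      rw [happ, Finset.sum_mul, Finset.sum_filter]
      refine Finset.sum_congr rfl fun i _ => ?_
      split_ifs with h
      · rw [h]
      · simp
    · intro w _ hw
      by_contra hn
      exact hw (by rw [h0 w hn, mul_zero])
  have hle : ∑ w ∈ W, R {w} * f w ≤ R.totalVariation.real Ω := by
    calc ∑ w ∈ W, R {w} * f w ≤ ∑ w ∈ W, R.totalVariation.real {w} := by
          refine Finset.sum_le_sum fun w _ => ?_
          have e1 := SignedMeasure.norm_le_totalVariation R {w}
          rw [Real.norm_eq_abs] at e1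
          calc R {w} * f w ≤ |R {w} * f w| := le_abs_self _
            _ = |R {w}| * |f w| := abs_mul _ _
            _ ≤ |R {w}| * 1 := by gcongr; exact h1 w
            _ ≤ _ := by rw [mul_one]; exact e1
      _ = R.totalVariation.real (W : Set R2) := by
          rw [sum_measureReal_singleton]
      _ ≤ _ := by
          refine measureReal_mono ?_ (measure_ne_top _ _)
          · intro w hw
            have : w ∈ W := hw
            exact (Finset.mem_filter.1 this).2
  rw [hsum]
  refine (ENNReal.ofReal_le_ofReal hle).trans ?_
  rw [Measure.real, ENNReal.ofReal_toReal (measure_ne_top _ _)]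

lemma tv_upper (Ω : Set R2) (hΩo : IsOpen Ω) (m : ℕ) (σ : Fin m → ℤ) (z : Fin m → R2)
    (hσ : ∀ i, σ i = 1 ∨ σ i = -1) :
    (∑ i, (σ i) • ((MeasureTheory.Measure.dirac (z i)).toSignedMeasure :
                MeasureTheory.SignedMeasure R2)).totalVariation Ω
      ≤ ∑ i, Ω.indicator (fun _ => (1 : ℝ≥0∞)) (z i) := by
  rw [SignedMeasure.totalVariation_eq_variation]
  refine (VectorMeasure.variation_finsetSum_le _ _ Ω).trans ?_
  rw [Measure.finsetSum_apply]
  refine Finset.sum_le_sum fun i _ => ?_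
  have : ((σ i) • ((MeasureTheory.Measure.dirac (z i)).toSignedMeasure :
                MeasureTheory.SignedMeasure R2)).variation = Measure.dirac (z i) := by
    rcases hσ i with h | h
    · rw [h, one_smul, Measure.variation_toSignedMeasure]
    · rw [h, neg_one_smul, VectorMeasure.variation_neg, Measure.variation_toSignedMeasure]
  rw [this, Measure.dirac_apply' _ hΩo.measurableSet]
  exact le_rfl

lemma mollify (f : R2 → ℝ) (hf : LipschitzWith 2 f) (hc : HasCompactSupport f) :
    ∃ g : ℕ → R2 → ℝ, (∀ n, ContDiff ℝ (⊤ : ℕ∞) (g n)) ∧ (∀ n, HasCompactSupport (g n)) ∧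
      (∀ n, LipschitzWith 2 (g n)) ∧ ∀ p, Tendsto (fun n => g n p) atTop (𝓝 (f p)) := by
  let η : ℕ → ContDiffBump (0 : R2) := fun n =>
    ⟨1 / (2 * ((n : ℝ) + 1)), 1 / ((n : ℝ) + 1), by positivity, by
      apply one_div_lt_one_div_of_lt <;> linarith [(Nat.cast_nonneg n : (0 : ℝ) ≤ n)]⟩
  have hη : Tendsto (fun n => (η n).rOut) atTop (𝓝 0) := tendsto_one_div_add_atTop_nhds_zero_nat
  refine ⟨fun n => convolution ((η n).normed volume) f (ContinuousLinearMap.lsmul ℝ ℝ) volume,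
    ?_, ?_, ?_, ?_⟩
  · intro n
    exact (η n).hasCompactSupport_normed.contDiff_convolution_left _ ((η n).contDiff_normed (μ := volume))
      hf.continuous.locallyIntegrable
  · intro n
    exact ((η n).hasCompactSupport_normed (μ := volume)).convolution _ hc
  · intro n
    have hex := ((η n).hasCompactSupport_normed (μ := volume)).convolutionExists_left_of_continuous_right
      (μ := volume) (ContinuousLinearMap.lsmul ℝ ℝ) (g := f)
      ((η n).continuous_normed (μ := volume)).locallyIntegrable hf.continuous
    apply LipschitzWith.of_dist_le_mul
    intro p q
    beta_reduce
    rw [dist_eq_norm, convolution_def, convolution_def, ← integral_sub (hex p) (hex q)]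
    have hI : Integrable ((η n).normed volume) :=
      (η n).continuous_normed.integrable_of_hasCompactSupport (η n).hasCompactSupport_normed
    calc _ ≤ ∫ t, (η n).normed volume t * (2 * dist p q) := by
          apply norm_integral_le_of_norm_le (hI.mul_const _)
          filter_upwards with t
          simp only [ContinuousLinearMap.lsmul_apply, smul_eq_mul]
          rw [← mul_sub, norm_mul, Real.norm_of_nonneg ((η n).nonneg_normed t)]
          gcongr
          · exact (η n).nonneg_normed t
          · have := hf.dist_le_mul (p - t) (q - t)
            rw [dist_sub_right, dist_eq_norm] at this
            exact this
      _ = _ := by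
          rw [integral_mul_const, (η n).integral_normed, one_mul]
          rfl
  · intro p
    exact ContDiffBump.convolution_tendsto_right_of_continuous hη hf.continuous p

lemma lip_summable (f : R2 → ℝ) (C : ℝ≥0) (hf : LipschitzWith C f) (x y : ℕ → R2)
    (hs : Summable fun i => dist (x i) (y i)) : Summable fun i => f (x i) - f (y i) := by
  refine Summable.of_norm_bounded (hs.mul_left (C : ℝ)) fun i => ?_
  have := hf.dist_le_mul (x i) (y i)
  rwa [dist_eq_norm] at this

lemma ofReal_tsum_le (h : ℕ → ℝ) (hs : Summable h) :
    ENNReal.ofReal (∑' k, h k) ≤ ∑' k, ENNReal.ofReal (h k) := by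
  have hs' : Summable fun k => max (h k) 0 := by
    refine Summable.of_nonneg_of_le (fun k => le_max_right _ _) (fun k => ?_) hs.abs
    exact max_le (le_abs_self _) (abs_nonneg _)
  calc ENNReal.ofReal (∑' k, h k) ≤ ENNReal.ofReal (∑' k, max (h k) 0) :=
        ENNReal.ofReal_le_ofReal (hs.tsum_le_tsum (fun k => le_max_left _ _) hs')
    _ = ∑' k, ENNReal.ofReal (max (h k) 0) :=
        ENNReal.ofReal_tsum_of_nonneg (fun k => le_max_right _ _) hs'
    _ = _ := by
        congr 1
        ext k
        simp

lemma tendsto_pairs (f : R2 → ℝ) (g : ℕ → R2 → ℝ) (hg : ∀ n, LipschitzWith 2 (g n))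
    (hlim : ∀ p, Tendsto (fun n => g n p) atTop (𝓝 (f p))) (x y : ℕ → R2)
    (hs : Summable fun i => dist (x i) (y i)) :
    Tendsto (fun n => ∑' i, (g n (x i) - g n (y i))) atTop (𝓝 (∑' i, (f (x i) - f (y i)))) := by
  refine tendsto_tsum_of_dominated_convergence (hs.mul_left 2)
    (fun i => (hlim _).sub (hlim _)) (Eventually.of_forall fun n i => ?_)
  have := (hg n).dist_le_mul (x i) (y i)
  rwa [dist_eq_norm] at this

lemma flat_le (Ω : Set R2) (hΩo : IsOpen Ω) (hΩb : Bornology.IsBounded Ω)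
    (x y : ℕ → R2) (hx : ∀ i, x i ∈ closure Ω) (hy : ∀ i, y i ∈ closure Ω)
    (hsum : Summable fun i => dist (x i) (y i))
    (φ : R2 → ℝ) (hφ : FlatAdmissible Ω (frontier Ω) 2 φ)
    (m : ℕ) (σ : Fin m → ℤ) (z : Fin m → R2) (a b : ℕ → R2)
    (hab : Summable (fun k => dist (a k) (b k)))
    (hid : ∀ φ : R2 → ℝ, ContDiff ℝ (⊤ : ℕ∞) φ → HasCompactSupport φ →
          ∑' i, (φ (x i) - φ (y i)) =
            (∑ i, (σ i : ℝ) * φ (z i)) + ∑' k, (φ (b k) - φ (a k))) :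
    ENNReal.ofReal (∑' i, (φ (x i) - φ (y i))) ≤
      (∑ i, (σ i) • ((MeasureTheory.Measure.dirac (z i)).toSignedMeasure :
                MeasureTheory.SignedMeasure R2)).totalVariation Ω +
            2 * ∑' k, μH[1] (segment ℝ (a k) (b k) ∩ Ω) := by
  set f := Ω.indicator φ with hf
  have hfL : LipschitzWith 2 f := ext_lipschitz Ω φ hφ
  have h0 : ∀ p, p ∉ Ω → f p = 0 := fun p hp => Set.indicator_of_notMem hp _
  have h1 : ∀ p, |f p| ≤ 1 := by
    intro p
    by_cases hp : p ∈ Ω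
    · rw [hf, Set.indicator_of_mem hp]
      exact hφ.2.2 p (subset_closure hp)
    · rw [h0 p hp]
      simp
  have hcl : ∀ p ∈ closure Ω, φ p = f p := by
    intro p hp
    by_cases hpΩ : p ∈ Ω
    · rw [hf, Set.indicator_of_mem hpΩ]
    · rw [h0 p hpΩ]
      apply hφ.2.1
      rw [hΩo.frontier_eq]
      exact ⟨hp, hpΩ⟩
  have hc : HasCompactSupport f := by
    refine HasCompactSupport.intro hΩb.isCompact_closure fun p hp => h0 p fun h => hp ?_
    exact subset_closure h
  have hba : Summable (fun k => dist (b k) (a k)) := by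
    simpa only [dist_comm] using hab
  obtain ⟨g, hg1, hg2, hg3, hg4⟩ := mollify f hfL hc
  have hidf : ∑' i, (f (x i) - f (y i)) =
      (∑ i, (σ i : ℝ) * f (z i)) + ∑' k, (f (b k) - f (a k)) := by
    have t1 := tendsto_pairs f g hg3 hg4 x y hsum
    have t2 := tendsto_pairs f g hg3 hg4 b a hba
    have t3 : Tendsto (fun n => ∑ i, (σ i : ℝ) * g n (z i)) atTop
        (𝓝 (∑ i, (σ i : ℝ) * f (z i))) :=
      tendsto_finsetSum _ fun i _ => (hg4 (z i)).const_mul _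
    refine tendsto_nhds_unique t1 ((t3.add t2).congr fun n => ?_)
    exact (hid (g n) (hg1 n) (hg2 n)).symm
  have e : ∑' i, (φ (x i) - φ (y i)) = ∑' i, (f (x i) - f (y i)) := by
    congr 1
    ext i
    rw [hcl _ (hx i), hcl _ (hy i)]
  rw [e, hidf]
  refine ENNReal.ofReal_add_le.trans (add_le_add (tv_lower Ω f h0 h1 m σ z) ?_)
  refine (ofReal_tsum_le _ (lip_summable f 2 hfL b a hba)).trans ?_
  rw [← ENNReal.tsum_mul_left]
  exact ENNReal.tsum_le_tsum fun k => seg_bound Ω hΩo f hfL h0 (a k) (b k)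

lemma flat_admissible_of_pairCost (Ω : Set R2) (p0 : R2) (hp0 : p0 ∈ frontier Ω) (φ : R2 → ℝ)
    (h1 : ∀ p q, φ p - φ q ≤ pairCost Ω p q) (h2 : φ p0 = 0) :
    LipschitzWith 2 φ ∧ FlatAdmissible Ω (frontier Ω) 2 φ := by
  have habs : ∀ p q, |φ p - φ q| ≤ pairCost Ω p q := by
    intro p q
    rw [abs_le]
    have e := h1 q p
    rw [pairCost_symm] at e
    exact ⟨by linarith, h1 p q⟩
  have hpt : ∀ p, |φ p| ≤ ptCost Ω p := by
    intro p
    have e := habs p p0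
    rw [h2, sub_zero] at e
    refine e.trans ((min_le_right _ _).trans ?_)
    rw [ptCost_frontier Ω hp0, add_zero]
  have hL : LipschitzWith 2 φ := by
    apply LipschitzWith.of_dist_le_mul
    intro p q
    rw [Real.dist_eq]
    exact (habs p q).trans (min_le_left _ _)
  refine ⟨hL, hL.lipschitzOnWith, fun p hp => ?_, fun p _ => (hpt p).trans (min_le_left _ _)⟩
  have e := hpt p
  rw [ptCost_frontier Ω hp] at e
  exact abs_nonpos_iff.1 e

lemma flat_ge (Ω : Set R2) (hΩo : IsOpen Ω) (hne : (frontier Ω).Nonempty)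
    (x y : ℕ → R2) (hsum : Summable fun i => dist (x i) (y i)) (ε : ℝ) (hε : 0 < ε) :
    ∃ φ, FlatAdmissible Ω (frontier Ω) 2 φ ∧
      ∃ (m : ℕ) (σ : Fin m → ℤ) (z : Fin m → R2) (a b : ℕ → R2),
        (∀ i, σ i = 1 ∨ σ i = -1) ∧
        Summable (fun k => dist (a k) (b k)) ∧
        (∀ φ : R2 → ℝ, ContDiff ℝ (⊤ : ℕ∞) φ → HasCompactSupport φ →
          ∑' i, (φ (x i) - φ (y i)) =
            (∑ i, (σ i : ℝ) * φ (z i)) + ∑' k, (φ (b k) - φ (a k))) ∧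
        (∑ i, (σ i) • ((MeasureTheory.Measure.dirac (z i)).toSignedMeasure :
                MeasureTheory.SignedMeasure R2)).totalVariation Ω +
            2 * ∑' k, μH[1] (segment ℝ (a k) (b k) ∩ Ω) ≤
          ENNReal.ofReal (∑' i, (φ (x i) - φ (y i))) + ENNReal.ofReal ε := by
  obtain ⟨p0, hp0⟩ := hne
  have hlim := tendsto_sum_nat_add (fun i => dist (x i) (y i))
  have hev : ∀ᶠ n in atTop, ∑' k, dist (x (k + n)) (y (k + n)) < ε / 4 :=
    hlim.eventually (gt_mem_nhds (by positivity))
  obtain ⟨n, hn, hn1⟩ := (hev.and (eventually_ge_atTop 1)).exists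
  have : Nonempty (Fin n) := ⟨⟨0, hn1⟩⟩
  have hsn : Summable fun k => dist (x (k + n)) (y (k + n)) :=
    (summable_nat_add_iff (f := fun i => dist (x i) (y i)) n).2 hsum
  obtain ⟨φ, τ, hτ, hφ1, hφ2, hφ3⟩ := flat_dual (pairCost Ω) (pairCost_self Ω) (pairCost_symm Ω)
    (pairCost_tri Ω) (fun i : Fin n => x i) (fun i : Fin n => y i) p0 (by
      intro p
      refine (min_le_right _ _).trans ?_
      rw [ptCost_frontier Ω hp0, add_zero]
      exact min_le_left _ _)
  obtain ⟨hφL, hφA⟩ := flat_admissible_of_pairCost Ω p0 hp0 φ hφ1 hφ2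
  choose w a b hwab hcost using fun i : Fin n =>
    pair_decomp Ω ⟨p0, hp0⟩ hΩo (x i) (y (τ i))
  let eR : Fin (Fintype.card (Fin n × Bool)) ≃ Fin n × Bool := (Fintype.equivFin _).symm
  obtain ⟨eS⟩ : Nonempty (ℕ ≃ (Fin n × Bool) ⊕ ℕ) := nonempty_equiv_of_countable
  let A : (Fin n × Bool) ⊕ ℕ → R2 := Sum.elim (fun s => a s.1 s.2) (fun k => y (k + n))
  let B : (Fin n × Bool) ⊕ ℕ → R2 := Sum.elim (fun s => b s.1 s.2) (fun k => x (k + n))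
  have hsplit : ∀ F : (Fin n × Bool) ⊕ ℕ → ℝ, Summable (fun k => F (Sum.inr k)) →
      HasSum F (∑ s, F (Sum.inl s) + ∑' k, F (Sum.inr k)) := by
    intro F hF
    exact HasSum.sum (hasSum_fintype _) hF.hasSum
  refine ⟨φ, hφA, Fintype.card (Fin n × Bool), fun k => if (eR k).2 then 1 else -1,
    fun k => w (eR k).1 (eR k).2, A ∘ eS, B ∘ eS, ?_, ?_, ?_, ?_⟩
  · intro i
    dsimp only
    split_ifs <;> simp
  · have : Summable fun s => dist (A s) (B s) := by
      refine (hsplit _ ?_).summable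
      simp only [A, B, Sum.elim_inr]
      simpa only [dist_comm] using hsn
    exact (eS.summable_iff (f := fun s => dist (A s) (B s))).2 this
  · intro ψ hψ1 hψ2
    obtain ⟨C, hC⟩ := ContDiff.lipschitzWith_of_hasCompactSupport hψ2 hψ1 (by simp)
    have hsψ := lip_summable ψ C hC x y hsum
    have hsψn := lip_summable ψ C hC _ _ hsn
    rw [← hsψ.sum_add_tsum_nat_add n]
    have hT : ∑' k, (ψ ((B ∘ eS) k) - ψ ((A ∘ eS) k)) =
        ∑ s : Fin n × Bool, (ψ (b s.1 s.2) - ψ (a s.1 s.2)) +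
          ∑' k, (ψ (x (k + n)) - ψ (y (k + n))) := by
      have := (hsplit (fun s => ψ (B s) - ψ (A s)) hsψn).tsum_eq
      rw [← eS.tsum_eq (fun s => ψ (B s) - ψ (A s))] at this
      exact this
    have hRr : ∑ k, (((if (eR k).2 then 1 else -1 : ℤ)) : ℝ) * ψ (w (eR k).1 (eR k).2) =
        ∑ s : Fin n × Bool, (((if s.2 then 1 else -1 : ℤ)) : ℝ) * ψ (w s.1 s.2) :=
      eR.sum_comp (fun s => (((if s.2 then 1 else -1 : ℤ)) : ℝ) * ψ (w s.1 s.2))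
    rw [hT, hRr, ← add_assoc]
    congr 1
    rw [Fintype.sum_prod_type, Fintype.sum_prod_type, ← Finset.sum_add_distrib,
      Finset.sum_range, Finset.sum_sub_distrib, ← hτ.sum_comp (fun i : Fin n => ψ (y i)),
      ← Finset.sum_sub_distrib]
    refine Finset.sum_congr rfl fun i _ => ?_
    rw [hwab i ψ]
    simp only [Fintype.sum_bool]
    push_cast
    simp
    ring
  · have hsφ := lip_summable φ 2 hφL x y hsum
    have hsφn := lip_summable φ 2 hφL _ _ hsn
    set T := ∑' k, dist (x (k + n)) (y (k + n)) with hTdef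
    have hT0 : 0 ≤ T := tsum_nonneg fun _ => dist_nonneg
    have hTφ : -(2 * T) ≤ ∑' k, (φ (x (k + n)) - φ (y (k + n))) := by
      rw [hTdef, ← tsum_mul_left, ← tsum_neg]
      refine (hsn.mul_left 2).neg.tsum_le_tsum (fun k => ?_) hsφn
      have := hφL.dist_le_mul (x (k + n)) (y (k + n))
      rw [Real.dist_eq] at this
      exact (abs_le.1 this).1
    have hmain : ∑ i : Fin n, pairCost Ω (x i) (y (τ i)) + 2 * T ≤
        ∑' i, (φ (x i) - φ (y i)) + ε := by
      rw [← hsφ.sum_add_tsum_nat_add n, Finset.sum_range, Finset.sum_sub_distrib]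
      linarith
    have hpn : ∀ p q, 0 ≤ pairCost Ω p q := fun p q =>
      le_min (by positivity) (add_nonneg (ptCost_nonneg _ _) (ptCost_nonneg _ _))
    refine le_trans ?_ ((ENNReal.ofReal_le_ofReal hmain).trans ENNReal.ofReal_add_le)
    rw [ENNReal.ofReal_add (Finset.sum_nonneg fun i _ => hpn _ _) (by positivity),
      ENNReal.ofReal_sum_of_nonneg (fun i _ => hpn _ _)]
    have hc1 : ∑' k, μH[1] (segment ℝ ((A ∘ eS) k) ((B ∘ eS) k) ∩ Ω) =
        ∑ s : Fin n × Bool, μH[1] (segment ℝ (a s.1 s.2) (b s.1 s.2) ∩ Ω) +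
          ∑' k, μH[1] (segment ℝ (y (k + n)) (x (k + n)) ∩ Ω) := by
      have h : HasSum (fun s => μH[1] (segment ℝ (A s) (B s) ∩ Ω))
        (∑ s : Fin n × Bool, μH[1] (segment ℝ (a s.1 s.2) (b s.1 s.2) ∩ Ω) +
          ∑' k, μH[1] (segment ℝ (y (k + n)) (x (k + n)) ∩ Ω)) :=
        HasSum.sum (hasSum_fintype _) ENNReal.summable.hasSum
      have := h.tsum_eq
      rw [← eS.tsum_eq (fun s => μH[1] (segment ℝ (A s) (B s) ∩ Ω))] at this
      exact this
    have hc2 : ∑' k, μH[1] (segment ℝ (y (k + n)) (x (k + n)) ∩ Ω) ≤ ENNReal.ofReal T := by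
      rw [hTdef, ENNReal.ofReal_tsum_of_nonneg (fun _ => dist_nonneg) hsn]
      refine ENNReal.tsum_le_tsum fun k => ?_
      rw [dist_comm]
      exact hausdorff_seg_le Ω _ _
    have hc3 := tv_upper Ω hΩo (Fintype.card (Fin n × Bool))
      (fun k => if (eR k).2 then 1 else -1) (fun k => w (eR k).1 (eR k).2) (by
        intro i
        split_ifs <;> simp)
    have hc4 : ∑ k, Ω.indicator (fun _ => (1 : ℝ≥0∞)) (w (eR k).1 (eR k).2) =
        ∑ s : Fin n × Bool, Ω.indicator (fun _ => (1 : ℝ≥0∞)) (w s.1 s.2) :=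
      eR.sum_comp (fun s => Ω.indicator (fun _ => (1 : ℝ≥0∞)) (w s.1 s.2))
    have hc5 := Finset.sum_le_sum fun i (_ : i ∈ Finset.univ) => hcost i
    rw [hc1, mul_add, ← add_assoc]
    refine add_le_add ?_ ?_
    · refine (add_le_add_left hc3 _).trans (le_trans (le_of_eq ?_) hc5)
      rw [hc4, Fintype.sum_prod_type, Fintype.sum_prod_type, Finset.sum_add_distrib,
        Finset.mul_sum]
    · rw [ENNReal.ofReal_mul zero_le_two, ENNReal.ofReal_ofNat]
      gcongr

/-- **Corollary 3.3 (`‖·‖_{flat,α}` as an infimum over `ℛ_f × 𝒮`).** For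
`Λ = Σ (δ_{x_i} − δ_{y_i})` with property `(P)`, the flat norm `‖Λ‖_{flat,α}` equals
the infimum of `|R|(Ω) + 2 Σ_k H¹([a_k,b_k] ∩ Ω)` over all decompositions
`Λ = R + ∂S` with `R` a finite sum of signed Dirac masses and `S` a countable sum of
oriented segments of finite total length. -/
theorem flatNorm_eq_inf_decompositions (Ω : Set R2) (hΩo : IsOpen Ω)
    (hΩb : Bornology.IsBounded Ω) (hΩc : IsConnected Ω) (hΩl : HasLipschitzBoundary Ω)
    (x y : ℕ → R2)
    (hmem : ∀ i, x i ∈ closure Ω ∧ y i ∈ closure Ω ∧ x i ≠ y i ∧ (x i ∈ Ω ∨ y i ∈ Ω))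
    (hsum : Summable fun i => dist (x i) (y i))
    (heq : ∀ i, dist (x i) (y i) = dbar Ω (x i) (y i)) :
    flatNorm Ω 2 (fun φ => ∑' i, (φ (x i) - φ (y i))) =
      sInf { c : ℝ≥0∞ | ∃ (m : ℕ) (σ : Fin m → ℤ) (z : Fin m → R2) (a b : ℕ → R2),
        (∀ i, σ i = 1 ∨ σ i = -1) ∧
        Summable (fun k => dist (a k) (b k)) ∧
        (∀ φ : R2 → ℝ, ContDiff ℝ (⊤ : ℕ∞) φ → HasCompactSupport φ →
          ∑' i, (φ (x i) - φ (y i)) =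
            (∑ i, (σ i : ℝ) * φ (z i)) + ∑' k, (φ (b k) - φ (a k))) ∧
        c = (∑ i, (σ i) • ((MeasureTheory.Measure.dirac (z i)).toSignedMeasure :
                MeasureTheory.SignedMeasure R2)).totalVariation Ω +
            2 * ∑' k, μH[1] (segment ℝ (a k) (b k) ∩ Ω) } := by
  have hne : (frontier Ω).Nonempty := by
    rw [nonempty_frontier_iff]
    refine ⟨hΩc.nonempty, fun h => ?_⟩
    rw [h] at hΩb
    exact NormedSpace.unbounded_univ ℝ R2 hΩb
  apply le_antisymm
  · refine iSup₂_le fun φ hφ => le_sInf ?_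
    rintro c ⟨m, σ, z, a, b, -, hab, hid, rfl⟩
    exact flat_le Ω hΩo hΩb x y (fun i => (hmem i).1) (fun i => (hmem i).2.1) hsum φ hφ
      m σ z a b hab hid
  · refine ENNReal.le_of_forall_pos_le_add fun ε hε _ => ?_
    obtain ⟨φ, hφ, m, σ, z, a, b, h1, h2, h3, h4⟩ := flat_ge Ω hΩo hne x y hsum ε hε
    refine (sInf_le ?_).trans (h4.trans ?_)
    · exact ⟨m, σ, z, a, b, h1, h2, h3, rfl⟩
    rw [ENNReal.ofReal_coe_nnreal]
    gcongr
    exact le_iSup₂ (f := fun (φ : R2 → ℝ) (_ : φ ∈ {φ : R2 → ℝ | FlatAdmissible Ω (frontier Ω) 2 φ}) =>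
      ENNReal.ofReal (∑' i, (φ (x i) - φ (y i)))) φ hφ
end
end
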